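/- arXiv:math/0601498 — 3 statements merged into one kernel-verified Lean document; each statement's English description precedes it below -/
import Mathlib

section
/- Let n be an odd positive integer that is not a perfect square, and z ≥ 3 real. Then Σ_{d ≤ z} μ²(2d) (8d|n) ≪ z^{1/2} n^{1/4} log(2n), where (·|·) is the Jacobi symbol and the sum is over positive integers d ≤ z. -/
/-!
Detect squarefreeness by `∑_{a² ∣ d} μ(a)` and pull the completely multiplicative character `χ` out
of the sum: what is left, for each `a`, is a character sum of length `N / a²`. It is at most
`N / a²` trivially, and at most `M = O(√q log q)` by the Pólya–Vinogradov inequality. Balancing the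
two at `a ≈ √(N / M)` gives `O(√(N M))`. Here `χ` is `d ↦ J(d | n)` on odd `d`, of modulus
`q = 2 n`; it is non-principal because `n` is not a square.

Pólya–Vinogradov for a primitive character follows by Fourier completion, since every nonzero
Fourier coefficient has absolute value `|gaussSum χ| = √q`. A general character of conductor `f` is
the underlying primitive one restricted to integers coprime to `q / f`; removing this condition by
Möbius costs a factor of the number of divisors of `q / f`, which is at most `2 √(q / f)`.
-/

open Finset ArithmeticFunction
open scoped ArithmeticFunction.Moebius NumberTheorySymbols ZMod Real

section CharacterSums

theorem two_mul_mul_one_sub_le_sin_pi_mul {t : ℝ} (h0 : 0 ≤ t) (h1 : t ≤ 1) :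
    2 * (t * (1 - t)) ≤ Real.sin (π * t) := by
  have linear_le_sin {s : ℝ} (hs : 0 ≤ s) (hs' : s ≤ 1 / 2) : 2 * s ≤ Real.sin (π * s) := by
    have := Real.mul_le_sin (x := π * s) (by positivity) (by nlinarith [Real.pi_pos])
    rwa [← mul_assoc, div_mul_cancel₀ _ Real.pi_ne_zero] at this
  rcases le_total t (1 / 2) with h | h
  · nlinarith [linear_le_sin h0 h]
  · have := linear_le_sin (s := 1 - t) (by linarith) (by linarith)
    rw [mul_one_sub π, Real.sin_pi_sub] at this
    nlinarith

variable {m : ℕ}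

theorem norm_apply_neg_one (χ : DirichletCharacter ℂ m) : ‖χ (-1)‖ = 1 :=
  χ.unit_norm_eq_one (-1)

variable [NeZero m]

theorem norm_stdAddChar_sub_one (k : ZMod m) :
    ‖ZMod.stdAddChar k - 1‖ = 2 * Real.sin (π * (k.val / m)) := by
  have hexp : ZMod.stdAddChar k = Complex.exp (Complex.I * (2 * π * (k.val / m) : ℝ)) := by
    rw [ZMod.stdAddChar_apply, ZMod.toCircle_apply]
    push_cast
    ring_nf
  have hfrac : (k.val / m : ℝ) ≤ 1 := div_le_one_of_le₀ (mod_cast k.val_lt.le) (by positivity)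
  have hsin : 0 ≤ Real.sin (π * (k.val / m)) :=
    Real.sin_nonneg_of_nonneg_of_le_pi (by positivity)
      (mul_le_of_le_one_right Real.pi_pos.le hfrac)
  rw [hexp, Complex.norm_exp_I_mul_ofReal_sub_one, Real.norm_eq_abs, mul_assoc,
    mul_div_cancel_left₀ _ two_ne_zero, abs_of_nonneg (by positivity)]

theorem norm_sum_Ico_stdAddChar_le {k : ZMod m} (hk : k ≠ 0) (a b : ℕ) :
    ‖∑ d ∈ Ico a b, ZMod.stdAddChar (k * (d : ZMod m))‖ ≤
      m / 2 * ((k.val : ℝ)⁻¹ + ((-k).val : ℝ)⁻¹) := by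
  rcases le_total b a with hab | hab
  · rw [Ico_eq_empty_of_le hab, sum_empty, norm_zero]
    positivity
  have hm : (0 : ℝ) < m := mod_cast NeZero.pos m
  have hk0 : (0 : ℝ) < k.val := mod_cast ZMod.val_pos.mpr hk
  have hkm : (0 : ℝ) < m - k.val := sub_pos.mpr (mod_cast k.val_lt)
  have hneg : ((-k).val : ℝ) = m - k.val := by
    have := NeZero.mk hk
    rw [ZMod.val_neg_of_ne_zero, Nat.cast_sub k.val_lt.le]
  have hpow (d : ℕ) : ZMod.stdAddChar (k * (d : ZMod m)) = ZMod.stdAddChar k ^ d := by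
    rw [← AddChar.map_nsmul_eq_pow, nsmul_eq_mul, mul_comm]
  have hne : ZMod.stdAddChar k ≠ 1 := fun h ↦
    hk <| ZMod.injective_stdAddChar <| h.trans (AddChar.map_zero_eq_one _).symm
  have hnum : ‖ZMod.stdAddChar k ^ b - ZMod.stdAddChar k ^ a‖ ≤ 2 := by
    refine (norm_sub_le _ _).trans_eq ?_
    simp only [norm_pow, AddChar.norm_apply, one_pow]
    norm_num
  have hden : 4 * (k.val / m * (1 - k.val / m)) ≤ ‖ZMod.stdAddChar k - 1‖ := by
    rw [norm_stdAddChar_sub_one]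
    have := two_mul_mul_one_sub_le_sin_pi_mul (t := k.val / m) (by positivity)
      ((div_le_one₀ hm).mpr (mod_cast k.val_lt.le))
    linarith
  have hfrac : (0 : ℝ) < 1 - k.val / m := sub_pos.mpr ((div_lt_one hm).mpr (mod_cast k.val_lt))
  simp_rw [hpow]
  rw [geom_sum_Ico hne hab, norm_div, hneg]
  calc _ ≤ 2 / (4 * (k.val / m * (1 - k.val / m)) : ℝ) := by gcongr
    _ = m / 2 * ((k.val : ℝ)⁻¹ + (m - k.val : ℝ)⁻¹) := by field_simp; ring

theorem sum_inv_val_le : ∑ k : ZMod m, (k.val : ℝ)⁻¹ ≤ 1 + Real.log m := by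
  obtain ⟨n, rfl⟩ := Nat.exists_eq_succ_of_ne_zero (NeZero.ne m)
  calc ∑ k : Fin (n + 1), ((k : ℕ) : ℝ)⁻¹ = harmonic n := by
        rw [Fin.sum_univ_eq_sum_range (fun v ↦ (v : ℝ)⁻¹), sum_range_succ']
        simp [harmonic]
    _ ≤ 1 + Real.log n := harmonic_le_one_add_log n
    _ ≤ 1 + Real.log (n + 1 : ℕ) := by
        rcases n.eq_zero_or_pos with rfl | hn
        · simp
        · gcongr
          exact n.le_succ

theorem norm_sum_Ico_le_of_norm_dft_le {Φ : ZMod m → ℂ} {B : ℝ} (h0 : 𝓕 Φ 0 = 0)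
    (hB : ∀ k, ‖𝓕 Φ k‖ ≤ B) (a b : ℕ) :
    ‖∑ d ∈ Ico a b, Φ d‖ ≤ B * (1 + Real.log m) := by
  have hB0 : 0 ≤ B := (norm_nonneg _).trans (hB 0)
  have hm : (m : ℝ) ≠ 0 := mod_cast NeZero.ne m
  have hcompletion : ∑ d ∈ Ico a b, Φ d =
      (m : ℂ)⁻¹ * ∑ k, (∑ d ∈ Ico a b, ZMod.stdAddChar (k * (d : ZMod m))) * 𝓕 Φ k := by
    have hinv (x : ZMod m) : Φ x = (m : ℂ)⁻¹ * ∑ k, ZMod.stdAddChar (k * x) * 𝓕 Φ k := by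
      simpa using ZMod.invDFT_apply (𝓕 Φ) x
    simp_rw [hinv, ← mul_sum, sum_mul]
    rw [sum_comm]
  have hterm (k : ZMod m) : ‖(∑ d ∈ Ico a b, ZMod.stdAddChar (k * (d : ZMod m))) * 𝓕 Φ k‖ ≤
      m / 2 * ((k.val : ℝ)⁻¹ + ((-k).val : ℝ)⁻¹) * B := by
    rcases eq_or_ne k 0 with rfl | hk
    · rw [h0, mul_zero, norm_zero]
      positivity
    · rw [norm_mul]
      gcongr
      exacts [norm_sum_Ico_stdAddChar_le hk a b, hB k]
  have hsymm : ∑ k : ZMod m, ((-k).val : ℝ)⁻¹ = ∑ k : ZMod m, (k.val : ℝ)⁻¹ :=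
    Fintype.sum_equiv (Equiv.neg (ZMod m)) _ _ fun _ ↦ rfl
  calc ‖∑ d ∈ Ico a b, Φ d‖
      ≤ (m : ℝ)⁻¹ * ∑ k : ZMod m, m / 2 * ((k.val : ℝ)⁻¹ + ((-k).val : ℝ)⁻¹) * B := by
        rw [hcompletion, norm_mul, norm_inv, Complex.norm_natCast]
        gcongr
        exact norm_sum_le_of_le _ fun k _ ↦ hterm k
    _ = B * ∑ k : ZMod m, (k.val : ℝ)⁻¹ := by
        rw [← sum_mul, ← mul_sum, sum_add_distrib, hsymm]
        field_simp
        ring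
    _ ≤ B * (1 + Real.log m) := by gcongr; exact sum_inv_val_le

theorem norm_gaussSum_inv_stdAddChar (χ : DirichletCharacter ℂ m) :
    ‖gaussSum χ⁻¹ ZMod.stdAddChar‖ = ‖gaussSum χ ZMod.stdAddChar‖ := by
  have hshift : gaussSum χ⁻¹ (ZMod.stdAddChar (N := m))⁻¹ =
      χ (-1) * gaussSum χ⁻¹ ZMod.stdAddChar := by
    have := gaussSum_mulShift_eq χ⁻¹ (ZMod.stdAddChar (N := m)) (-1)
    rwa [inv_inv, Units.val_neg, Units.val_one, ← AddChar.inv_mulShift] at this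
  rw [← norm_star (gaussSum χ _), star_gaussSum_eq, hshift, norm_mul, norm_apply_neg_one,
    one_mul]

theorem norm_gaussSum_of_isPrimitive {χ : DirichletCharacter ℂ m} (hχ : χ.IsPrimitive) :
    ‖gaussSum χ ZMod.stdAddChar‖ = √m := by
  have hχ' : χ⁻¹.IsPrimitive := by
    rw [DirichletCharacter.isPrimitive_def, DirichletCharacter.conductor_inv, hχ]
  have hdft : 𝓕 χ = fun k ↦ gaussSum χ ZMod.stdAddChar * χ⁻¹ (-k) :=
    funext fun k ↦ by rw [hχ.fourierTransform_eq_inv_mul_gaussSum, mul_comm]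
  -- Evaluate `𝓕 (𝓕 χ)` at `-1`, by Fourier inversion and by applying `hdft` twice.
  have hprod : gaussSum χ ZMod.stdAddChar * (χ (-1) * gaussSum χ⁻¹ ZMod.stdAddChar) = m := by
    have := congrFun (ZMod.dft_dft χ) (-1)
    rw [hdft, ZMod.dft_const_mul, ZMod.dft_comp_neg] at this
    simpa [hχ'.fourierTransform_eq_inv_mul_gaussSum] using this
  rw [eq_comm, Real.sqrt_eq_iff_mul_self_eq m.cast_nonneg (norm_nonneg _)]
  simpa [norm_gaussSum_inv_stdAddChar, norm_apply_neg_one] using (congrArg norm hprod).symm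

theorem norm_sum_Ico_le_of_isPrimitive {χ : DirichletCharacter ℂ m} (hχ : χ.IsPrimitive)
    (hm : m ≠ 1) (a b : ℕ) : ‖∑ d ∈ Ico a b, χ d‖ ≤ √m * (1 + Real.log m) := by
  have := Fact.mk ((Nat.one_lt_iff_ne_zero_and_ne_one).mpr ⟨NeZero.ne m, hm⟩)
  refine norm_sum_Ico_le_of_norm_dft_le (Φ := χ) ?_ (fun k ↦ ?_) a b
  · rw [hχ.fourierTransform_eq_inv_mul_gaussSum, neg_zero, MulChar.map_zero, zero_mul]
  · rw [hχ.fourierTransform_eq_inv_mul_gaussSum, norm_mul, norm_gaussSum_of_isPrimitive hχ]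
    exact mul_le_of_le_one_left (Real.sqrt_nonneg _) (χ⁻¹.norm_le_one _)

end CharacterSums

section Sieve

theorem card_divisors_le_two_mul_sqrt (n : ℕ) : (#n.divisors : ℝ) ≤ 2 * √n := by
  have hsmall : #{d ∈ n.divisors | d ≤ n.sqrt} ≤ n.sqrt := by
    simpa using card_le_card (t := Icc 1 n.sqrt) fun d hd ↦ by
      rw [mem_filter] at hd
      exact mem_Icc.mpr ⟨Nat.pos_of_mem_divisors hd.1, hd.2⟩
  have hlarge : #{d ∈ n.divisors | ¬ d ≤ n.sqrt} ≤ n.sqrt := by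
    refine (card_le_card_of_injOn (n / ·) (t := Icc 1 n.sqrt) (fun d hd ↦ ?_) ?_).trans (by simp)
    · obtain ⟨hdn, hd⟩ := mem_filter.mp hd
      have hle : n / d ≤ n.sqrt := Nat.lt_succ_iff.mp <| Nat.div_lt_of_lt_mul <|
        n.lt_succ_sqrt.trans_le (Nat.mul_le_mul_right _ (not_le.mp hd))
      exact mem_Icc.mpr ⟨Nat.div_pos (Nat.divisor_le hdn) (Nat.pos_of_mem_divisors hdn), hle⟩
    · have involutive : ∀ d ∈ n.divisors, n / (n / d) = d := fun d hd ↦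
        Nat.div_div_self (Nat.dvd_of_mem_divisors hd) (Nat.ne_zero_of_mem_divisors hd)
      intro d hd e he hde
      rw [← involutive d (mem_filter.mp hd).1, ← involutive e (mem_filter.mp he).1]
      exact congrArg (n / ·) hde
  have hcard : #n.divisors ≤ 2 * n.sqrt := by
    rw [← card_filter_add_card_filter_not (s := n.divisors) (· ≤ n.sqrt)]
    omega
  calc (#n.divisors : ℝ) ≤ 2 * n.sqrt := mod_cast hcard
    _ ≤ 2 * √n := by gcongr; exact Real.nat_sqrt_le_real_sqrt

theorem sum_divisors_moebius (n : ℕ) : ∑ d ∈ n.divisors, μ d = if n = 1 then 1 else 0 := by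
  rw [← coe_mul_zeta_apply, moebius_mul_coe_zeta, one_apply]

theorem sum_divisors_filter_dvd_moebius {k : ℕ} (hk : k ≠ 0) (d : ℕ) :
    ∑ r ∈ k.divisors with r ∣ d, μ r = if d.Coprime k then 1 else 0 := by
  have : {r ∈ k.divisors | r ∣ d} = (d.gcd k).divisors := by
    ext r
    simp [Nat.dvd_gcd_iff, hk, and_comm]
  simp only [this, sum_divisors_moebius, Nat.coprime_iff_gcd_eq_one]

theorem sq_dvd_sq_mul_iff_of_squarefree {a b c : ℕ} (hb : b ≠ 0) (ha : Squarefree a) :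
    c ^ 2 ∣ b ^ 2 * a ↔ c ∣ b := by
  refine ⟨fun h ↦ ?_, fun h ↦ (pow_dvd_pow_of_dvd h 2).mul_right a⟩
  obtain ⟨g, c, b, hg, hcop, rfl, rfl⟩ :=
    Nat.exists_coprime' (m := c) (n := b) (Nat.gcd_pos_of_pos_right _ hb.bot_lt)
  rw [mul_pow, mul_pow, mul_right_comm] at h
  have hca : c ^ 2 ∣ a := (hcop.pow 2 2).dvd_of_dvd_mul_left <|
    Nat.dvd_of_mul_dvd_mul_right (pow_pos hg 2) h
  rw [Nat.isUnit_iff.mp (ha c (by rwa [← sq]))]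
  exact mul_dvd_mul_right (one_dvd b) g

theorem sum_sq_dvd_moebius {N d : ℕ} (hd : d ∈ Icc 1 N) :
    ∑ a ∈ Icc 1 N with a ^ 2 ∣ d, μ a = if Squarefree d then 1 else 0 := by
  obtain ⟨hd1, hdN⟩ := mem_Icc.mp hd
  obtain ⟨s, b, hs0, hb, rfl, hs⟩ := Nat.sq_mul_squarefree_of_pos hd1
  have hdiv : {a ∈ Icc 1 N | a ^ 2 ∣ b ^ 2 * s} = b.divisors := by
    ext a
    rw [mem_filter, sq_dvd_sq_mul_iff_of_squarefree hb.ne' hs, Nat.mem_divisors, mem_Icc]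
    refine ⟨fun h ↦ ⟨h.2, hb.ne'⟩, fun h ↦ ⟨⟨Nat.pos_of_dvd_of_pos h.1 hb, ?_⟩, h.1⟩⟩
    nlinarith [Nat.le_of_dvd hb h.1]
  have hsq : Squarefree (b ^ 2 * s) ↔ b = 1 := by
    refine ⟨fun h ↦ Nat.isUnit_iff.mp (h b ⟨s, by ring⟩), ?_⟩
    rintro rfl
    simpa using hs
  simp only [hdiv, sum_divisors_moebius, hsq]

theorem sum_Icc_filter_dvd {M : Type*} [AddCommMonoid M] (f : ℕ → M) (N : ℕ) {r : ℕ}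
    (hr : 0 < r) : ∑ d ∈ Icc 1 N with r ∣ d, f d = ∑ e ∈ Icc 1 (N / r), f (r * e) := by
  symm
  refine sum_nbij' (r * ·) (· / r) ?_ ?_ ?_ ?_ fun _ _ ↦ rfl
  · intro e he
    simp_all [Nat.le_div_iff_mul_le, mul_comm, Nat.one_le_iff_ne_zero, hr.ne']
  · intro d hd
    simp only [mem_filter, mem_Icc] at hd ⊢
    exact ⟨Nat.div_pos (Nat.le_of_dvd hd.1.1 hd.2) hr, Nat.div_le_div_right hd.1.2⟩
  · intro e _
    exact Nat.mul_div_cancel_left e hr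
  · intro d hd
    exact Nat.mul_div_cancel' (mem_filter.mp hd).2

theorem sum_Icc_sum_filter_dvd_mul {ι R : Type*} [CommSemiring R] (f : ℕ →* R) (s : Finset ι)
    {r : ι → ℕ} (hr : ∀ i ∈ s, 0 < r i) (c : ι → R) (N : ℕ) :
    ∑ d ∈ Icc 1 N, (∑ i ∈ s with r i ∣ d, c i) * f d =
      ∑ i ∈ s, c i * f (r i) * ∑ e ∈ Icc 1 (N / r i), f e := by
  simp_rw [sum_filter, sum_mul, ite_mul, zero_mul]
  rw [sum_comm]
  refine sum_congr rfl fun i hi ↦ ?_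
  rw [← sum_filter, sum_Icc_filter_dvd _ _ (hr i hi), mul_sum]
  simp only [map_mul, mul_assoc]

theorem sum_min_div_sq_le_mul_add_div {x M A : ℝ} (hx : 0 ≤ x) (hM : 0 ≤ M) (hA : 0 < A) (N : ℕ) :
    ∑ a ∈ Icc 1 N, min M (x / (a : ℝ) ^ 2) ≤ A * M + 2 * (x / A) := by
  have hsmall : ∑ a ∈ Icc 1 ⌊A⌋₊, min M (x / (a : ℝ) ^ 2) ≤ A * M :=
    calc _ ≤ ⌊A⌋₊ * M := by
          simpa using sum_le_card_nsmul (Icc 1 ⌊A⌋₊) _ M fun a _ ↦ min_le_left _ _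
      _ ≤ A * M := by gcongr; exact Nat.floor_le hA.le
  have hlarge : ∑ a ∈ Ioo ⌊A⌋₊ (N + 1), min M (x / (a : ℝ) ^ 2) ≤ 2 * (x / A) :=
    calc _ ≤ ∑ a ∈ Ioo ⌊A⌋₊ (N + 1), x * ((a : ℝ) ^ 2)⁻¹ :=
          sum_le_sum fun a _ ↦ min_le_right _ _
      _ ≤ x * (2 / (⌊A⌋₊ + 1)) := by
          rw [← mul_sum]
          gcongr
          exact sum_Ioo_inv_sq_le _ _
      _ ≤ x * (2 / A) := by gcongr; exact (Nat.lt_floor_add_one A).le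
      _ = 2 * (x / A) := by ring
  have hcover : Icc 1 N ⊆ Icc 1 ⌊A⌋₊ ∪ Ioo ⌊A⌋₊ (N + 1) := fun a ha ↦ by
    simp only [mem_union, mem_Icc, mem_Ioo] at ha ⊢
    omega
  have hdisj : Disjoint (Icc 1 ⌊A⌋₊) (Ioo ⌊A⌋₊ (N + 1)) := disjoint_left.mpr fun a ha ha' ↦ by
    simp only [mem_Icc, mem_Ioo] at ha ha'
    omega
  calc _ ≤ ∑ a ∈ Icc 1 ⌊A⌋₊ ∪ Ioo ⌊A⌋₊ (N + 1), min M (x / (a : ℝ) ^ 2) :=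
        sum_le_sum_of_subset_of_nonneg hcover fun a _ _ ↦ by positivity
    _ ≤ A * M + 2 * (x / A) := by
        rw [sum_union hdisj]
        exact add_le_add hsmall hlarge

theorem sum_min_div_sq_le {x M : ℝ} (hx : 0 ≤ x) (hM : 0 ≤ M) (N : ℕ) :
    ∑ a ∈ Icc 1 N, min M (x / (a : ℝ) ^ 2) ≤ 3 * √(x * M) := by
  rcases hx.eq_or_lt with rfl | hx
  · simp [hM]
  rcases hM.eq_or_lt with rfl | hM
  · simpa using sum_nonpos fun (a : ℕ) (_ : a ∈ Icc 1 N) ↦ min_le_left 0 (x / (a : ℝ) ^ 2)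
  have hmul : √x / √M * M = √x * √M := by rw [div_mul_eq_mul_div, mul_div_assoc, Real.div_sqrt]
  have hdiv : x / (√x / √M) = √x * √M := by
    rw [div_div_eq_mul_div, mul_div_right_comm, Real.div_sqrt]
  calc _ ≤ √x / √M * M + 2 * (x / (√x / √M)) :=
        sum_min_div_sq_le_mul_add_div hx.le hM.le (by positivity) N
    _ = 3 * √(x * M) := by rw [hmul, hdiv, Real.sqrt_mul hx.le]; ring

section Norm

variable {F : Type*} [NormedField F]

theorem norm_moebius_le_one (n : ℕ) : ‖(μ n : F)‖ ≤ 1 := by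
  rcases moebius_eq_or n with h | h | h <;> simp [h]

variable {f : ℕ →* F}

theorem norm_sum_Icc_sum_filter_dvd_moebius_mul_le (hf : ∀ n, ‖f n‖ ≤ 1) (s : Finset ℕ)
    {r : ℕ → ℕ} (hr : ∀ i ∈ s, 0 < r i) (N : ℕ) :
    ‖∑ d ∈ Icc 1 N, ((∑ i ∈ s with r i ∣ d, μ i : ℤ) : F) * f d‖ ≤
      ∑ i ∈ s, ‖∑ e ∈ Icc 1 (N / r i), f e‖ := by
  simp_rw [Int.cast_sum]
  rw [sum_Icc_sum_filter_dvd_mul f s hr (fun i ↦ (μ i : F))]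
  refine norm_sum_le_of_le _ fun i _ ↦ ?_
  rw [norm_mul, norm_mul]
  exact mul_le_of_le_one_left (norm_nonneg _)
    (mul_le_one₀ (norm_moebius_le_one i) (norm_nonneg _) (hf _))

theorem norm_sum_coprime_le (hf : ∀ n, ‖f n‖ ≤ 1) {k : ℕ} (hk : k ≠ 0) {M : ℝ}
    (hM : ∀ N, ‖∑ d ∈ Icc 1 N, f d‖ ≤ M) (N : ℕ) :
    ‖∑ d ∈ Icc 1 N with d.Coprime k, f d‖ ≤ #k.divisors * M := by
  calc _ = ‖∑ d ∈ Icc 1 N, ((∑ r ∈ k.divisors with r ∣ d, μ r : ℤ) : F) * f d‖ := by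
        simp [sum_divisors_filter_dvd_moebius hk, sum_filter]
    _ ≤ ∑ r ∈ k.divisors, ‖∑ e ∈ Icc 1 (N / r), f e‖ :=
        norm_sum_Icc_sum_filter_dvd_moebius_mul_le hf _ (fun _ ↦ Nat.pos_of_mem_divisors) N
    _ ≤ #k.divisors * M := by
        simpa using sum_le_card_nsmul k.divisors _ M fun r _ ↦ hM (N / r)

theorem norm_sum_squarefree_le (hf : ∀ n, ‖f n‖ ≤ 1) {M : ℝ}
    (hM : ∀ N, ‖∑ d ∈ Icc 1 N, f d‖ ≤ M) (N : ℕ) :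
    ‖∑ d ∈ Icc 1 N with Squarefree d, f d‖ ≤ 3 * √(N * M) := by
  have hM0 : 0 ≤ M := (norm_nonneg _).trans (hM 0)
  have htrivial (n : ℕ) : ‖∑ d ∈ Icc 1 n, f d‖ ≤ n := by
    simpa using norm_sum_le_of_le (Icc 1 n) fun d _ ↦ hf d
  calc _ = ‖∑ d ∈ Icc 1 N, ((∑ a ∈ Icc 1 N with a ^ 2 ∣ d, μ a : ℤ) : F) * f d‖ := by
        rw [sum_filter]
        exact congrArg norm <| sum_congr rfl fun d hd ↦ by simp [sum_sq_dvd_moebius hd]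
    _ ≤ ∑ a ∈ Icc 1 N, ‖∑ e ∈ Icc 1 (N / a ^ 2), f e‖ :=
        norm_sum_Icc_sum_filter_dvd_moebius_mul_le hf _
          (fun a ha ↦ pow_pos (mem_Icc.mp ha).1 2) N
    _ ≤ ∑ a ∈ Icc 1 N, min M (N / (a : ℝ) ^ 2) := by
        gcongr with a
        refine le_min (hM _) ((htrivial _).trans ?_)
        exact_mod_cast Nat.cast_div_le (α := ℝ)
    _ ≤ 3 * √(N * M) := sum_min_div_sq_le N.cast_nonneg hM0 N

end Norm

end Sieve

section PolyaVinogradov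

variable {q : ℕ}

theorem apply_natCast_eq_ite_primitiveCharacter (χ : DirichletCharacter ℂ q) (d : ℕ) :
    χ d = if d.Coprime (q / χ.conductor) then χ.primitiveCharacter d else 0 := by
  have hq : χ.conductor * (q / χ.conductor) = q := Nat.mul_div_cancel' χ.conductor_dvd_level
  by_cases hd : d.Coprime q
  · have := χ.primitiveCharacter_apply_of_isCoprime (Nat.isCoprime_iff_coprime.mpr hd)
    rw [if_pos (hd.coprime_dvd_right (Dvd.intro_left _ hq))]
    simpa using this.symm
  · rw [MulChar.map_nonunit _ (mt (ZMod.isUnit_iff_coprime _ _).mp hd)]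
    split_ifs with hcop
    · have hcond : ¬ d.Coprime χ.conductor := fun h ↦ hd (hq ▸ h.mul_right hcop)
      rw [MulChar.map_nonunit _ (mt (ZMod.isUnit_iff_coprime _ _).mp hcond)]
    · rfl

variable [NeZero q]

theorem norm_sum_Icc_le_of_ne_one {χ : DirichletCharacter ℂ q} (hχ : χ ≠ 1) (N : ℕ) :
    ‖∑ d ∈ Icc 1 N, χ d‖ ≤ 2 * √q * (1 + Real.log q) := by
  set f := χ.conductor with hf
  have hq : q / f * f = q := Nat.div_mul_cancel χ.conductor_dvd_level
  have : NeZero f := ⟨χ.conductor_ne_zero⟩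
  have hf1 : f ≠ 1 := mt DirichletCharacter.eq_one_iff_conductor_eq_one.mpr hχ
  have hf0 : (0 : ℝ) < f := mod_cast NeZero.pos f
  have hfq : (f : ℝ) ≤ q := mod_cast Nat.le_of_dvd (NeZero.pos q) χ.conductor_dvd_level
  have hprim (n : ℕ) : ‖∑ d ∈ Icc 1 n, χ.primitiveCharacter d‖ ≤ √f * (1 + Real.log f) :=
    norm_sum_Ico_le_of_isPrimitive χ.primitiveCharacter_isPrimitive hf1 1 (n + 1)
  have hk : q / f ≠ 0 := left_ne_zero_of_mul (hq.trans_ne (NeZero.ne q))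
  calc ‖∑ d ∈ Icc 1 N, χ d‖
      = ‖∑ d ∈ Icc 1 N with d.Coprime (q / f), χ.primitiveCharacter d‖ := by
        rw [sum_filter]
        simp only [apply_natCast_eq_ite_primitiveCharacter χ, hf]
    _ ≤ #(q / f).divisors * (√f * (1 + Real.log f)) :=
        norm_sum_coprime_le
          (f := (χ.primitiveCharacter : ZMod f →* ℂ).comp (Nat.castRingHom (ZMod f) : ℕ →* ZMod f))
          (fun n ↦ χ.primitiveCharacter.norm_le_one n) hk hprim N
    _ ≤ 2 * √(q / f : ℕ) * (√f * (1 + Real.log q)) := by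
        gcongr
        exact card_divisors_le_two_mul_sqrt _
    _ = 2 * √q * (1 + Real.log q) := by
        rw [← mul_assoc, mul_assoc 2, ← Real.sqrt_mul (Nat.cast_nonneg _), ← Nat.cast_mul, hq]

theorem norm_sum_squarefree_le_of_ne_one {χ : DirichletCharacter ℂ q} (hχ : χ ≠ 1) (N : ℕ) :
    ‖∑ d ∈ Icc 1 N with Squarefree d, χ d‖ ≤ 3 * √(N * (2 * √q * (1 + Real.log q))) :=
  norm_sum_squarefree_le
    (f := (χ : ZMod q →* ℂ).comp (Nat.castRingHom (ZMod q) : ℕ →* ZMod q))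
    (fun n ↦ χ.norm_le_one n) (norm_sum_Icc_le_of_ne_one hχ) N

end PolyaVinogradov

section JacobiCharacter

theorem exists_prime_odd_factorization_of_not_isSquare {n : ℕ} (hn : ¬ IsSquare n) :
    ∃ p, p.Prime ∧ Odd (n.factorization p) := by
  by_contra! heven
  have hn0 : n ≠ 0 := by
    rintro rfl
    exact hn IsSquare.zero
  rw [← Nat.prod_factorization_pow_eq_self hn0] at hn
  refine hn (Finset.isSquare_prod _ fun p hp ↦ ?_)
  have := heven p (Nat.prime_of_mem_primeFactors hp)
  exact (Nat.not_odd_iff_even.mp this).isSquare_pow p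

theorem exists_jacobiSym_eq_neg_one {n : ℕ} (hodd : Odd n) (hn : ¬ IsSquare n) :
    ∃ a : ℕ, J(a | n) = -1 := by
  obtain ⟨p, hp, hk⟩ := exists_prime_odd_factorization_of_not_isSquare hn
  have := Fact.mk hp
  have hn0 : n ≠ 0 := hodd.pos.ne'
  have hp2 : ringChar (ZMod p) ≠ 2 := by
    rw [ZMod.ringChar_zmod_n]
    rintro rfl
    simp [Nat.factorization_eq_zero_of_not_dvd hodd.not_two_dvd_nat] at hk
  obtain ⟨b, hb⟩ := quadraticChar_exists_neg_one hp2
  obtain ⟨a, hap, ham⟩ := Nat.chineseRemainder (Nat.coprime_ordCompl hp hn0) b.val 1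
  have hJp : J(a | p) = -1 := by
    rw [← jacobiSym.legendreSym.to_jacobiSym, legendreSym, ← hb]
    congr 1
    simpa using (ZMod.natCast_eq_natCast_iff _ _ _).mpr hap
  have hJm : J(a | ordCompl[p] n) = 1 := by
    rw [jacobiSym.mod_left' (mod_cast ham : (a : ℤ) % _ = (1 : ℕ) % _), Nat.cast_one,
      jacobiSym.one_left]
  refine ⟨a, ?_⟩
  rw [← Nat.ordProj_mul_ordCompl_eq_self n p,
    jacobiSym.mul_right' _ (pow_ne_zero _ hp.ne_zero) (Nat.ordCompl_pos p hn0).ne',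
    jacobiSym.pow_right, hJp, hJm, hk.neg_one_pow, mul_one]

/-- The Jacobi symbol `a ↦ J(a | n)` as a Dirichlet character modulo `n`, evaluated on the
representative of a residue class in `[0, n)`. -/
def jacobiChar (n : ℕ) [NeZero n] : DirichletCharacter ℤ n where
  toFun a := J(a.val | n)
  map_one' := by
    rw [← Nat.cast_one (R := ZMod n), ZMod.val_natCast, Int.natCast_mod, ← jacobiSym.mod_left,
      Nat.cast_one, jacobiSym.one_left]
  map_mul' a b := by
    rw [ZMod.val_mul, Int.natCast_mod, ← jacobiSym.mod_left, Nat.cast_mul, jacobiSym.mul_left]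
  map_nonunit' a ha := by
    rw [jacobiSym.eq_zero_iff_not_coprime, Int.gcd_natCast_natCast]
    contrapose! ha
    rw [← ZMod.natCast_zmod_val a]
    exact (ZMod.isUnit_iff_coprime _ _).mpr ha

theorem jacobiChar_natCast (n : ℕ) [NeZero n] (a : ℕ) : jacobiChar n a = J(a | n) := by
  change J((a : ZMod n).val | n) = J(a | n)
  rw [ZMod.val_natCast, Int.natCast_mod, ← jacobiSym.mod_left]

theorem jacobiChar_ne_one {n : ℕ} [NeZero n] (hodd : Odd n) (hn : ¬ IsSquare n) :
    jacobiChar n ≠ 1 := by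
  obtain ⟨a, ha⟩ := exists_jacobiSym_eq_neg_one hodd hn
  intro h
  rw [← jacobiChar_natCast, h] at ha
  by_cases hunit : IsUnit (a : ZMod n)
  · norm_num [MulChar.one_apply hunit] at ha
  · norm_num [MulChar.map_nonunit _ hunit] at ha

/-- The character `d ↦ J(d | n)` of modulus `2 * n`: the Jacobi symbol restricted to odd
arguments, with complex values. -/
noncomputable def oddJacobiChar (n : ℕ) [NeZero n] : DirichletCharacter ℂ (2 * n) :=
  DirichletCharacter.changeLevel (n.dvd_mul_left 2)
    ((jacobiChar n).ringHomComp (Int.castRingHom ℂ))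

theorem oddJacobiChar_ne_one {n : ℕ} [NeZero n] (hodd : Odd n) (hn : ¬ IsSquare n) :
    oddJacobiChar n ≠ 1 := by
  rw [oddJacobiChar, Ne, DirichletCharacter.changeLevel_eq_one_iff]
  exact (MulChar.ringHomComp_ne_one_iff Int.cast_injective).mpr (jacobiChar_ne_one hodd hn)

theorem oddJacobiChar_natCast (n : ℕ) [NeZero n] (d : ℕ) :
    oddJacobiChar n d = if Odd d then (J(d | n) : ℂ) else 0 := by
  by_cases h : d.Coprime (2 * n)
  · have hcop : IsCoprime (d : ℤ) (2 * n : ℕ) := Nat.isCoprime_iff_coprime.mpr h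
    have := DirichletCharacter.changeLevel_eq_cast_of_dvd'
      ((jacobiChar n).ringHomComp (Int.castRingHom ℂ)) (n.dvd_mul_left 2) hcop
    rw [if_pos (Nat.coprime_two_right.mp h.coprime_mul_right_right)]
    simpa [oddJacobiChar, jacobiChar_natCast] using this
  · rw [MulChar.map_nonunit _ (mt (ZMod.isUnit_iff_coprime _ _).mp h)]
    split_ifs with hd
    · have hcop : ¬ d.Coprime n := fun hcop ↦ h (hd.coprime_two_right.mul_right hcop)
      rw [jacobiSym.eq_zero_iff_not_coprime.mpr (by simpa using hcop), Int.cast_zero]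
    · rfl

theorem squarefree_two_mul_iff {d : ℕ} : Squarefree (2 * d) ↔ Odd d ∧ Squarefree d := by
  rw [Nat.squarefree_mul_iff, Nat.coprime_two_left]
  simp [Nat.squarefree_two]

theorem sum_squarefree_two_mul_jacobiSym (n : ℕ) [NeZero n] (N : ℕ) :
    ((∑ d ∈ Icc 1 N, if Squarefree (2 * d) then (J(8 * d | n) : ℝ) else 0 : ℝ) : ℂ) =
      J(8 | n) * ∑ d ∈ Icc 1 N with Squarefree d, oddJacobiChar n d := by
  rw [mul_sum, sum_filter, Complex.ofReal_sum]
  refine sum_congr rfl fun d _ ↦ ?_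
  by_cases hd : Odd d <;> by_cases hsq : Squarefree d <;>
    simp [squarefree_two_mul_iff, oddJacobiChar_natCast, jacobiSym.mul_left, hd, hsq]

end JacobiCharacter

theorem abs_sum_squarefree_two_mul_jacobiSym_le {n : ℕ} (hodd : Odd n) (hn : ¬ IsSquare n)
    (N : ℕ) :
    |∑ d ∈ Icc 1 N, if Squarefree (2 * d) then (J(8 * d | n) : ℝ) else 0| ≤
      3 * √(N * (2 * √(2 * n) * (1 + Real.log (2 * n)))) := by
  have : NeZero n := ⟨hodd.pos.ne'⟩
  have hJ : ‖(J(8 | n) : ℂ)‖ ≤ 1 := by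
    rcases jacobiSym.trichotomy 8 n with h | h | h <;> simp [h]
  rw [← Real.norm_eq_abs, ← Complex.norm_real, sum_squarefree_two_mul_jacobiSym, norm_mul]
  refine (mul_le_of_le_one_left (norm_nonneg _) hJ).trans ?_
  exact_mod_cast norm_sum_squarefree_le_of_ne_one (oddJacobiChar_ne_one hodd hn) N

theorem one_le_log_two_mul_of_not_isSquare {n : ℕ} (hn : ¬ IsSquare n) :
    1 ≤ Real.log (2 * n) := by
  have two_le : 2 ≤ n := by
    by_contra!
    interval_cases n <;> simp at hn
  have : (2 : ℝ) ≤ n := mod_cast two_le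
  rw [Real.le_log_iff_exp_le (by linarith)]
  linarith [Real.exp_one_lt_three]

theorem quadratic_character_sum_nonsquare_bound_general {n : ℕ} (hodd : Odd n)
    (hn : ¬ IsSquare n) {z : ℝ} (hz : 0 ≤ z) :
    |∑ d ∈ Icc 1 ⌊z⌋₊, if Squarefree (2 * d) then (J(8 * d | n) : ℝ) else 0| ≤
      8 * z ^ ((1 : ℝ) / 2) * (n : ℝ) ^ ((1 : ℝ) / 4) * √(Real.log (2 * n)) := by
  have hlog := one_le_log_two_mul_of_not_isSquare hn
  have hfourth : (n : ℝ) ^ ((1 : ℝ) / 4) = √√n := by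
    rw [Real.sqrt_eq_rpow, Real.sqrt_eq_rpow, ← Real.rpow_mul n.cast_nonneg]
    norm_num
  have hsqrt : √(2 * n) ≤ 3 / 2 * √n := by
    rw [Real.sqrt_mul zero_le_two]
    gcongr
    exact Real.sqrt_le_iff.mpr (by norm_num)
  calc _ ≤ 3 * √(⌊z⌋₊ * (2 * √(2 * n) * (1 + Real.log (2 * n)))) :=
        abs_sum_squarefree_two_mul_jacobiSym_le hodd hn _
    _ ≤ 3 * √(z * (2 * (3 / 2 * √n) * (2 * Real.log (2 * n)))) := by
        gcongr
        · exact Nat.floor_le hz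
        · linarith
    _ = 3 * √6 * (√z * √√n * √(Real.log (2 * n))) := by
        rw [show z * (2 * (3 / 2 * √n) * (2 * Real.log (2 * n))) =
          6 * (z * √n * Real.log (2 * n)) by ring, Real.sqrt_mul (by norm_num),
          Real.sqrt_mul (by positivity), Real.sqrt_mul hz, mul_assoc 3]
    _ ≤ 8 * (√z * √√n * √(Real.log (2 * n))) := by
        gcongr
        nlinarith [Real.sqrt_nonneg 6, Real.sq_sqrt (show (0 : ℝ) ≤ 6 by norm_num)]
    _ = _ := by rw [hfourth, ← Real.sqrt_eq_rpow]; ring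

/-- For odd positive non-square `n` and real `z ≥ 3`,
`∑_{d ≤ z} μ²(2d) (8d|n) ≪ z^{1/2} n^{1/4} log(2n)`, where `(·|·)` is the Jacobi
symbol and `μ²(2d) = 1` exactly when `2d` is squarefree. -/
theorem quadratic_character_sum_nonsquare_bound :
    ∃ C : ℝ, 0 < C ∧ ∀ (n : ℕ) (z : ℝ), 0 < n → Odd n → ¬ IsSquare n → 3 ≤ z →
      |∑ d ∈ Finset.Icc 1 ⌊z⌋₊,
          if Squarefree (2 * d) then ((jacobiSym (8 * d) n : ℤ) : ℝ) else 0| ≤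
        C * z ^ ((1 : ℝ) / 2) * (n : ℝ) ^ ((1 : ℝ) / 4) * Real.log (2 * n) := by
  refine ⟨8, by norm_num, fun n z _ hodd hn hz ↦
    (quadratic_character_sum_nonsquare_bound_general hodd hn (by linarith)).trans ?_⟩
  gcongr
  exact Real.sqrt_le_self_iff.mpr (.inr (one_le_log_two_mul_of_not_isSquare hn))
end

section
/- Let n be an odd positive integer that is a perfect square, and z ≥ 3. Then Σ_{d ≤ z} μ²(2d) (8d|n) = (z/ζ(2)) Π_{p | 2n} p/(p+1) + O_ε(z^{1/2+ε} n^{ε}), since (8d|n) = 1 when gcd(d, n) = 1 and 0 otherwise for squarefree odd d. -/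
/-!
If `n` is an odd square, then `(8d|n)` is the indicator of `gcd(d, n) = 1`, so the sum counts the
squarefree `d ≤ z` coprime to `N = 2n`. Expanding `μ²(d) = ∑_{a² ∣ d} μ(a)` turns this count into
`∑_{a ≤ √z, (a, N) = 1} μ(a) #{b ≤ z / a² : (b, N) = 1}`. Legendre's sieve gives the inner count as
`(z / a²) φ(N) / N` up to `2^ω(N)`, and completing the sum over `a` to the Dirichlet series of `μ`
away from `N` at `s = 2` costs `O(√z)`. The only loss of a power `n ^ ε` comes from
`2^ω(n) ≪ n ^ ε`.
-/

open ArithmeticFunction Finset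
open scoped NumberTheorySymbols

/-! ### Integers coprime to a given modulus -/

lemma card_filter_Ioc_forall_not_dvd (R : Type*) [CommRing R] {S : Finset ℕ}
    (hS : (S : Set ℕ).Pairwise Nat.Coprime) (m : ℕ) :
    (#{b ∈ Ioc 0 m | ∀ p ∈ S, ¬ p ∣ b} : R) =
      ∑ T ∈ S.powerset, (-1) ^ #T * ((m / ∏ p ∈ T, p : ℕ) : R) := by
  have prod_dvd_iff {T : Finset ℕ} (hT : T ∈ S.powerset) (b : ℕ) :
      ∏ p ∈ T, p ∣ b ↔ ∀ p ∈ T, p ∣ b := by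
    refine ⟨fun h p hp ↦ (dvd_prod_of_mem _ hp).trans h, prod_dvd_of_isRelPrime ?_⟩
    exact (hS.mono (mem_powerset.1 hT)).imp fun _ _ ↦ Nat.coprime_iff_isRelPrime.1
  have indicator_eq (b : ℕ) : (if ∀ p ∈ S, ¬ p ∣ b then 1 else 0 : R) =
      ∑ T ∈ S.powerset, (-1) ^ #T * if ∏ p ∈ T, p ∣ b then 1 else 0 := by
    calc (if ∀ p ∈ S, ¬ p ∣ b then 1 else 0 : R)
        = ∏ p ∈ S, (1 - if p ∣ b then 1 else 0) := by
          have (p : ℕ) : (1 - if p ∣ b then 1 else 0 : R) = if ¬ p ∣ b then 1 else 0 := by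
            split_ifs <;> simp
          simp_rw [this, prod_ite_zero, prod_const_one]
      _ = ∑ T ∈ S.powerset, (-1) ^ #T * if ∏ p ∈ T, p ∣ b then 1 else 0 := by
          rw [prod_sub]
          refine sum_congr rfl fun T hT ↦ ?_
          simp [prod_ite_zero, prod_dvd_iff hT]
  simp_rw [card_filter, Nat.cast_sum, Nat.cast_ite, Nat.cast_one, Nat.cast_zero, indicator_eq]
  rw [sum_comm]
  refine sum_congr rfl fun T _ ↦ ?_
  rw [← mul_sum, sum_boole, Nat.Ioc_filter_dvd_card_eq_div]

lemma abs_card_filter_Ioc_forall_not_dvd_sub_le {S : Finset ℕ}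
    (hS : (S : Set ℕ).Pairwise Nat.Coprime) {x : ℝ} (hx : 0 ≤ x) :
    |(#{b ∈ Ioc 0 ⌊x⌋₊ | ∀ p ∈ S, ¬ p ∣ b} : ℝ) - x * ∏ p ∈ S, (1 - (p : ℝ)⁻¹)| ≤ 2 ^ #S := by
  have count_eq : (#{b ∈ Ioc 0 ⌊x⌋₊ | ∀ p ∈ S, ¬ p ∣ b} : ℝ) =
      ∑ T ∈ S.powerset, (-1) ^ #T * (⌊x / (∏ p ∈ T, p : ℕ)⌋₊ : ℝ) := by
    simp_rw [Nat.floor_div_natCast]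
    exact card_filter_Ioc_forall_not_dvd ℝ hS ⌊x⌋₊
  have density_eq : x * ∏ p ∈ S, (1 - (p : ℝ)⁻¹) =
      ∑ T ∈ S.powerset, (-1) ^ #T * (x / (∏ p ∈ T, p : ℕ)) := by
    rw [prod_sub, mul_sum]
    refine sum_congr rfl fun T _ ↦ ?_
    rw [prod_const_one, prod_inv_distrib]
    push_cast
    ring
  calc _ = |∑ T ∈ S.powerset, (-1) ^ #T *
          ((⌊x / (∏ p ∈ T, p : ℕ)⌋₊ : ℝ) - x / (∏ p ∈ T, p : ℕ))| := by
        simp_rw [count_eq, density_eq, ← sum_sub_distrib, mul_sub]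
    _ ≤ ∑ T ∈ S.powerset, 1 := by
        refine (abs_sum_le_sum_abs _ _).trans (sum_le_sum fun T _ ↦ ?_)
        rw [abs_mul, abs_pow, abs_neg, abs_one, one_pow, one_mul]
        exact Nat.abs_floor_sub_le (by positivity)
    _ = 2 ^ #S := by simp

lemma coprime_iff_forall_primeFactors_not_dvd {N : ℕ} (hN : N ≠ 0) (b : ℕ) :
    b.Coprime N ↔ ∀ p ∈ N.primeFactors, ¬ p ∣ b := by
  rw [← not_iff_not, Nat.Prime.not_coprime_iff_dvd]
  simp only [Nat.mem_primeFactors_of_ne_zero hN]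
  grind

lemma totient_div_self_eq_prod {N : ℕ} (hN : N ≠ 0) :
    (N.totient : ℝ) / N = ∏ p ∈ N.primeFactors, (1 - (p : ℝ)⁻¹) := by
  rw [div_eq_iff (by exact_mod_cast hN), mul_comm]
  simpa using congrArg (Rat.cast : ℚ → ℝ) N.totient_eq_mul_prod_factors

lemma abs_card_coprime_sub_le {N : ℕ} (hN : N ≠ 0) {x : ℝ} (hx : 0 ≤ x) :
    |(#{b ∈ Ioc 0 ⌊x⌋₊ | b.Coprime N} : ℝ) - x * (N.totient / N)| ≤ 2 ^ #N.primeFactors := by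
  simp_rw [totient_div_self_eq_prod hN, coprime_iff_forall_primeFactors_not_dvd hN]
  refine abs_card_filter_Ioc_forall_not_dvd_sub_le (fun p hp q hq hpq ↦ ?_) hx
  exact (Nat.coprime_primes (Nat.prime_of_mem_primeFactors hp)
    (Nat.prime_of_mem_primeFactors hq)).2 hpq

/-! ### Squarefree integers -/

lemma sq_dvd_sq_mul_iff {a c s : ℕ} (hs : Squarefree s) : a ^ 2 ∣ c ^ 2 * s ↔ a ∣ c := by
  refine ⟨fun h ↦ ?_, fun h ↦ (pow_dvd_pow_of_dvd h 2).mul_right s⟩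
  obtain rfl | hc := eq_or_ne c 0
  · exact dvd_zero a
  obtain ⟨g, a', c', hg, hcop, rfl, rfl⟩ :=
    Nat.exists_coprime' (Nat.gcd_pos_of_pos_right a hc.bot_lt)
  have h_sq : a' ^ 2 ∣ c' ^ 2 * s := by
    rw [mul_pow, mul_pow, mul_right_comm] at h
    exact Nat.dvd_of_mul_dvd_mul_right (by positivity) h
  have : a' * a' ∣ s := by
    rw [← sq]
    exact (hcop.pow 2 2).dvd_of_dvd_mul_left h_sq
  simp [Nat.isUnit_iff.1 (hs a' this)]

lemma squarefree_sq_mul_iff {c s : ℕ} (hs : Squarefree s) : Squarefree (c ^ 2 * s) ↔ c = 1 := by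
  refine ⟨fun h ↦ Nat.isUnit_iff.1 (h c ?_), fun h ↦ by simpa [h] using hs⟩
  exact sq c ▸ dvd_mul_right _ _

lemma sum_moebius_filter_sq_dvd {d Z : ℕ} (hd : d ≠ 0) (hdZ : d ≤ Z) :
    ∑ a ∈ Ioc 0 Z.sqrt with a ^ 2 ∣ d, moebius a = if Squarefree d then 1 else 0 := by
  obtain ⟨s, c, rfl, hs⟩ := Nat.sq_mul_squarefree d
  have hc : c ≠ 0 := by rintro rfl; simp at hd
  have filter_eq : {a ∈ Ioc 0 Z.sqrt | a ^ 2 ∣ c ^ 2 * s} = c.divisors := by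
    ext a
    simp only [mem_filter, mem_Ioc, sq_dvd_sq_mul_iff hs, Nat.mem_divisors, ne_eq, hc,
      not_false_eq_true, and_true, and_iff_right_iff_imp]
    refine fun ha ↦ ⟨Nat.pos_of_dvd_of_pos ha hc.bot_lt, Nat.le_sqrt'.2 ?_⟩
    exact (Nat.le_of_dvd hd.bot_lt ((sq_dvd_sq_mul_iff hs).2 ha)).trans hdZ
  rw [filter_eq, ← coe_zeta_mul_apply, coe_zeta_mul_moebius, one_apply]
  simp only [squarefree_sq_mul_iff hs]

lemma card_filter_Ioc_dvd_and {k : ℕ} (hk : k ≠ 0) (m : ℕ) (P : ℕ → Prop) [DecidablePred P] :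
    #{b ∈ Ioc 0 m | k ∣ b ∧ P b} = #{b ∈ Ioc 0 (m / k) | P (k * b)} := by
  symm
  rw [← card_map ⟨(k * ·), mul_right_injective₀ hk⟩]
  congr 1
  ext b
  simp only [mem_filter, mem_Ioc, mem_map, Function.Embedding.coeFn_mk,
    Nat.le_div_iff_mul_le hk.bot_lt]
  constructor
  · rintro ⟨c, ⟨⟨hc, hcm⟩, hP⟩, rfl⟩
    exact ⟨⟨Nat.mul_pos hk.bot_lt hc, mul_comm c k ▸ hcm⟩, dvd_mul_right k c, hP⟩
  · rintro ⟨⟨hb, hbm⟩, ⟨c, rfl⟩, hP⟩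
    exact ⟨c, ⟨⟨Nat.pos_of_mul_pos_left hb, mul_comm k c ▸ hbm⟩, hP⟩, rfl⟩

/-- The Möbius function restricted to the integers coprime to `N`, that is, the product of `μ`
with the trivial Dirichlet character mod `N`. -/
def coprimeMoebius (N a : ℕ) : ℤ := if a.Coprime N then moebius a else 0

lemma abs_coprimeMoebius_le_one (N a : ℕ) : |coprimeMoebius N a| ≤ 1 := by
  unfold coprimeMoebius
  split_ifs
  · exact abs_moebius_le_one
  · simp

lemma card_squarefree_coprime_eq_sum (N Z : ℕ) :
    (#{d ∈ Ioc 0 Z | Squarefree d ∧ d.Coprime N} : ℤ) =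
      ∑ a ∈ Ioc 0 Z.sqrt, coprimeMoebius N a * #{b ∈ Ioc 0 (Z / a ^ 2) | b.Coprime N} := by
  have card_fiber {a : ℕ} (ha : a ≠ 0) :
      (moebius a * #{d ∈ Ioc 0 Z | a ^ 2 ∣ d ∧ d.Coprime N} : ℤ) =
        coprimeMoebius N a * #{b ∈ Ioc 0 (Z / a ^ 2) | b.Coprime N} := by
    rw [card_filter_Ioc_dvd_and (pow_ne_zero 2 ha)]
    simp only [coprimeMoebius, Nat.coprime_mul_iff_left, Nat.coprime_pow_left_iff two_pos]
    by_cases haN : a.Coprime N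
    · simp only [if_pos haN, and_iff_right haN]
    · simp [haN]
  calc (#{d ∈ Ioc 0 Z | Squarefree d ∧ d.Coprime N} : ℤ)
      = ∑ d ∈ Ioc 0 Z with d.Coprime N, if Squarefree d then 1 else 0 := by
        rw [sum_boole, filter_filter]
        simp only [and_comm]
    _ = ∑ d ∈ Ioc 0 Z with d.Coprime N, ∑ a ∈ Ioc 0 Z.sqrt,
          if a ^ 2 ∣ d then moebius a else 0 := by
        refine sum_congr rfl fun d hd ↦ ?_
        obtain ⟨hd, -⟩ := mem_filter.1 hd
        rw [← sum_filter, sum_moebius_filter_sq_dvd (mem_Ioc.1 hd).1.ne' (mem_Ioc.1 hd).2]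
    _ = ∑ a ∈ Ioc 0 Z.sqrt, (moebius a * #{d ∈ Ioc 0 Z | a ^ 2 ∣ d ∧ d.Coprime N} : ℤ) := by
        rw [sum_comm]
        refine sum_congr rfl fun a _ ↦ ?_
        rw [← sum_filter, sum_const, filter_filter, nsmul_eq_mul, mul_comm]
        simp only [and_comm]
    _ = _ := sum_congr rfl fun a ha ↦ card_fiber (mem_Ioc.1 ha).1.ne'

/-! ### The Dirichlet series of the coprime Möbius function -/

lemma LSeriesHasSum_coprimeMoebius {N : ℕ} (hN : N ≠ 0) {s : ℂ} (hs : 1 < s.re) :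
    LSeriesHasSum (fun a ↦ (coprimeMoebius N a : ℂ)) s
      ((∏ p ∈ N.primeFactors, (1 - (p : ℂ) ^ (-s))) * riemannZeta s)⁻¹ := by
  have : NeZero N := ⟨hN⟩
  have hs1 : s ≠ 1 := by rintro rfl; simp at hs
  let χ : DirichletCharacter ℂ N := 1
  have coe_eq : (fun a ↦ (coprimeMoebius N a : ℂ)) = fun a : ℕ ↦ χ a * (moebius a : ℂ) := by
    ext a
    by_cases ha : a.Coprime N
    · simp [coprimeMoebius, χ, ha, MulChar.one_apply ((ZMod.isUnit_iff_coprime a N).2 ha)]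
    · simp [coprimeMoebius, ha, χ.map_nonunit (mt (ZMod.isUnit_iff_coprime a N).1 ha)]
  have mul_eq_one := DirichletCharacter.LSeries.mul_mu_eq_one χ hs
  rw [← DirichletCharacter.LFunction_eq_LSeries χ hs] at mul_eq_one
  change DirichletCharacter.LFunctionTrivChar N s * _ = 1 at mul_eq_one
  rw [DirichletCharacter.LFunctionTrivChar_eq_mul_riemannZeta hs1] at mul_eq_one
  rw [coe_eq, ← eq_inv_of_mul_eq_one_right mul_eq_one]
  exact (χ.LSeriesSummable_mul (LSeriesSummable_moebius_iff.2 hs)).LSeriesHasSum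

lemma hasSum_coprimeMoebius_div_sq {N : ℕ} (hN : N ≠ 0) :
    HasSum (fun a : ℕ ↦ (coprimeMoebius N a : ℝ) / a ^ 2)
      ((∏ p ∈ N.primeFactors, (1 - ((p : ℝ) ^ 2)⁻¹)) * (Real.pi ^ 2 / 6))⁻¹ := by
  have h := LSeriesHasSum_coprimeMoebius hN (s := 2) (by norm_num)
  rw [LSeriesHasSum, riemannZeta_two] at h
  rw [← Complex.hasSum_ofReal]
  convert h using 1
  · ext a
    obtain rfl | ha := eq_or_ne a 0 <;> simp [LSeries.term_def, *]
  · simp [Complex.cpow_neg]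

lemma totient_div_self_mul_inv_prod {N : ℕ} (hN : N ≠ 0) :
    (N.totient / N : ℝ) * (∏ p ∈ N.primeFactors, (1 - ((p : ℝ) ^ 2)⁻¹))⁻¹ =
      ∏ p ∈ N.primeFactors, (p : ℝ) / (p + 1) := by
  rw [totient_div_self_eq_prod hN, ← prod_inv_distrib, ← prod_mul_distrib]
  refine prod_congr rfl fun p hp ↦ ?_
  have hp1 : (1 : ℝ) < p := by exact_mod_cast (Nat.prime_of_mem_primeFactors hp).one_lt
  have : (p : ℝ) ^ 2 - 1 ≠ 0 := by nlinarith
  field_simp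
  ring

lemma abs_sum_div_sq_sub_le {f : ℕ → ℝ} {B S : ℝ} (hf : ∀ a, |f a| ≤ B)
    (hS : HasSum (fun a : ℕ ↦ f a / (a : ℝ) ^ 2) S) (R : ℕ) :
    |∑ a ∈ Ioc 0 R, f a / (a : ℝ) ^ 2 - S| ≤ B * (2 / (R + 1)) := by
  have hB : 0 ≤ B := (abs_nonneg _).trans (hf 0)
  refine le_of_tendsto (hS.tendsto_sum_nat.const_sub _).abs ?_
  filter_upwards [Filter.eventually_gt_atTop R] with n hn
  have sum_range_eq : ∑ a ∈ range n, f a / (a : ℝ) ^ 2 =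
      ∑ a ∈ Ioc 0 R, f a / (a : ℝ) ^ 2 + ∑ a ∈ Ioo R n, f a / (a : ℝ) ^ 2 := by
    rw [range_eq_Ico, sum_eq_sum_Ico_succ_bot (by omega), Nat.cast_zero, zero_pow two_ne_zero,
      div_zero, zero_add]
    exact (sum_Ico_consecutive _ (by omega) hn).symm
  rw [sum_range_eq, sub_add_cancel_left, abs_neg]
  calc |∑ a ∈ Ioo R n, f a / (a : ℝ) ^ 2|
      ≤ ∑ a ∈ Ioo R n, B * ((a : ℝ) ^ 2)⁻¹ := by
        refine (abs_sum_le_sum_abs _ _).trans (sum_le_sum fun a _ ↦ ?_)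
        rw [abs_div, abs_sq, div_eq_mul_inv]
        gcongr
        exact hf a
    _ ≤ B * (2 / (R + 1)) := by
        rw [← mul_sum]
        gcongr
        exact sum_Ioo_inv_sq_le R n

/-! ### Counting squarefree integers coprime to a given modulus -/

lemma sqrt_natFloor (x : ℝ) : Nat.sqrt ⌊x⌋₊ = ⌊√x⌋₊ := by
  refine eq_of_forall_le_iff fun a ↦ ?_
  obtain rfl | ha := eq_or_ne a 0
  · simp
  rw [Nat.le_sqrt', Nat.le_floor_iff' (pow_ne_zero 2 ha), Nat.le_floor_iff' ha,
    Real.le_sqrt' (by positivity), Nat.cast_pow]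

lemma abs_card_squarefree_coprime_sub_sum_le {N : ℕ} (hN : N ≠ 0) {x : ℝ} (hx : 0 ≤ x) :
    |(#{d ∈ Ioc 0 ⌊x⌋₊ | Squarefree d ∧ d.Coprime N} : ℝ) -
        x * (N.totient / N) * ∑ a ∈ Ioc 0 ⌊√x⌋₊, (coprimeMoebius N a : ℝ) / a ^ 2| ≤
      √x * 2 ^ #N.primeFactors := by
  have count_eq : (#{d ∈ Ioc 0 ⌊x⌋₊ | Squarefree d ∧ d.Coprime N} : ℝ) =
      ∑ a ∈ Ioc 0 ⌊√x⌋₊,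
        (coprimeMoebius N a : ℝ) * #{b ∈ Ioc 0 ⌊x / (a ^ 2 : ℕ)⌋₊ | b.Coprime N} := by
    simp_rw [Nat.floor_div_natCast, ← sqrt_natFloor]
    exact_mod_cast card_squarefree_coprime_eq_sum N ⌊x⌋₊
  calc _ = |∑ a ∈ Ioc 0 ⌊√x⌋₊, (coprimeMoebius N a : ℝ) *
          (#{b ∈ Ioc 0 ⌊x / (a ^ 2 : ℕ)⌋₊ | b.Coprime N} -
            x / (a ^ 2 : ℕ) * (N.totient / N))| := by
        rw [count_eq, mul_sum, ← sum_sub_distrib]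
        congr! 2 with a
        push_cast
        ring
    _ ≤ ∑ a ∈ Ioc 0 ⌊√x⌋₊, 2 ^ #N.primeFactors := by
        refine (abs_sum_le_sum_abs _ _).trans (sum_le_sum fun a _ ↦ ?_)
        rw [abs_mul]
        refine (mul_le_of_le_one_left (abs_nonneg _) ?_).trans
          (abs_card_coprime_sub_le hN (by positivity))
        exact_mod_cast abs_coprimeMoebius_le_one N a
    _ ≤ √x * 2 ^ #N.primeFactors := by
        rw [sum_const, Nat.card_Ioc, tsub_zero, nsmul_eq_mul]
        gcongr
        exact Nat.floor_le (Real.sqrt_nonneg x)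

lemma abs_mul_sum_coprimeMoebius_sub_le {N : ℕ} (hN : N ≠ 0) {x : ℝ} (hx : 0 ≤ x) :
    |x * (N.totient / N) * ∑ a ∈ Ioc 0 ⌊√x⌋₊, (coprimeMoebius N a : ℝ) / a ^ 2 -
        x / (Real.pi ^ 2 / 6) * ∏ p ∈ N.primeFactors, (p : ℝ) / (p + 1)| ≤ 2 * √x := by
  set M : ℝ := ((∏ p ∈ N.primeFactors, (1 - ((p : ℝ) ^ 2)⁻¹)) * (Real.pi ^ 2 / 6))⁻¹ with hM
  have main_term_eq : x / (Real.pi ^ 2 / 6) * ∏ p ∈ N.primeFactors, (p : ℝ) / (p + 1) =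
      x * (N.totient / N) * M := by
    rw [← totient_div_self_mul_inv_prod hN, hM, mul_inv]
    ring
  have totient_le : (N.totient / N : ℝ) ≤ 1 :=
    div_le_one_of_le₀ (by exact_mod_cast N.totient_le) (by positivity)
  have tail_le : |∑ a ∈ Ioc 0 ⌊√x⌋₊, (coprimeMoebius N a : ℝ) / a ^ 2 - M| ≤
      1 * (2 / (⌊√x⌋₊ + 1)) :=
    abs_sum_div_sq_sub_le (fun a ↦ by exact_mod_cast abs_coprimeMoebius_le_one N a)
      (hasSum_coprimeMoebius_div_sq hN) _
  rw [main_term_eq, ← mul_sub, abs_mul, abs_of_nonneg (by positivity)]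
  calc _ ≤ x * 1 * (1 * (2 / (⌊√x⌋₊ + 1))) := by gcongr
    _ = 2 * (√x * √x) / (⌊√x⌋₊ + 1) := by rw [Real.mul_self_sqrt hx]; ring
    _ ≤ 2 * √x := by
        rw [div_le_iff₀ (by positivity), ← mul_assoc]
        gcongr
        exact (Nat.lt_floor_add_one √x).le

theorem abs_card_squarefree_coprime_sub_le {N : ℕ} (hN : N ≠ 0) {x : ℝ} (hx : 0 ≤ x) :
    |(#{d ∈ Ioc 0 ⌊x⌋₊ | Squarefree d ∧ d.Coprime N} : ℝ) -
        x / (Real.pi ^ 2 / 6) * ∏ p ∈ N.primeFactors, (p : ℝ) / (p + 1)| ≤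
      3 * √x * 2 ^ #N.primeFactors := by
  have one_le : (1 : ℝ) ≤ 2 ^ #N.primeFactors := one_le_pow₀ one_le_two
  calc _ ≤ √x * 2 ^ #N.primeFactors + 2 * √x :=
        (abs_sub_le _ _ _).trans (add_le_add (abs_card_squarefree_coprime_sub_sum_le hN hx)
          (abs_mul_sum_coprimeMoebius_sub_le hN hx))
    _ ≤ 3 * √x * 2 ^ #N.primeFactors := by
        linarith [le_mul_of_one_le_right (Real.sqrt_nonneg x) one_le]

/-! ### Subpolynomial growth of `A ^ ω(n)` -/

lemma prod_primeFactors_rpow_le {n : ℕ} (hn : n ≠ 0) {ε : ℝ} (hε : 0 ≤ ε) :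
    ∏ p ∈ n.primeFactors, (p : ℝ) ^ ε ≤ (n : ℝ) ^ ε := by
  rw [Real.finsetProd_rpow _ _ fun p _ ↦ by positivity]
  rw [← Nat.cast_prod]
  gcongr
  exact Nat.le_of_dvd hn.bot_lt (Nat.prod_primeFactors_dvd n)

lemma exists_pow_card_primeFactors_le {A : ℝ} (hA : 1 ≤ A) {ε : ℝ} (hε : 0 < ε) :
    ∃ C : ℝ, 0 < C ∧ ∀ n : ℕ, n ≠ 0 → A ^ #n.primeFactors ≤ C * (n : ℝ) ^ ε := by
  obtain ⟨K, hK⟩ := exists_nat_ge (A ^ ε⁻¹)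
  refine ⟨A ^ K, by positivity, fun n hn ↦ ?_⟩
  have le_rpow_of_ge {p : ℕ} (hp : K ≤ p) : A ≤ (p : ℝ) ^ ε := by
    rw [← Real.rpow_inv_le_iff_of_pos (by positivity) (by positivity) hε]
    exact hK.trans (by exact_mod_cast hp)
  have le_mul_rpow {p : ℕ} (hp : p ∈ n.primeFactors) :
      A ≤ (if p < K then A else 1) * (p : ℝ) ^ ε := by
    split_ifs with hpK
    · have hp1 : (1 : ℝ) ≤ p := by exact_mod_cast (Nat.prime_of_mem_primeFactors hp).one_le
      exact le_mul_of_one_le_right (by positivity) (Real.one_le_rpow hp1 hε.le)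
    · rw [one_mul]
      exact le_rpow_of_ge (not_lt.1 hpK)
  have prod_small_le : ∏ p ∈ n.primeFactors, (if p < K then A else 1) ≤ A ^ K := by
    rw [← prod_filter, prod_const]
    refine pow_le_pow_right₀ hA ((card_le_card fun p hp ↦ ?_).trans (card_range K).le)
    exact mem_range.2 (mem_filter.1 hp).2
  calc A ^ #n.primeFactors
      ≤ ∏ p ∈ n.primeFactors, ((if p < K then A else 1) * (p : ℝ) ^ ε) := by
        rw [← prod_const]
        exact prod_le_prod (fun _ _ ↦ by positivity) fun p hp ↦ le_mul_rpow hp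
    _ ≤ A ^ K * (n : ℝ) ^ ε := by
        rw [prod_mul_distrib]
        gcongr
        exact prod_primeFactors_rpow_le hn hε.le

/-! ### The Jacobi symbol with square modulus -/

lemma jacobiSym_of_isSquare {n : ℕ} (hn : IsSquare n) (hn0 : n ≠ 0) (a : ℤ) :
    J(a | n) = if a.gcd n = 1 then 1 else 0 := by
  split_ifs with h
  · obtain ⟨m, rfl⟩ := hn
    rw [← Int.isCoprime_iff_gcd_eq_one, Nat.cast_mul] at h
    rw [← sq, jacobiSym.pow_right,
      jacobiSym.sq_one (Int.isCoprime_iff_gcd_eq_one.1 h.of_mul_right_left)]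
  · exact jacobiSym.eq_zero_iff.2 ⟨hn0, h⟩

lemma ite_squarefree_jacobiSym_eq {n : ℕ} (hodd : Odd n) (hn : IsSquare n) (d : ℕ) :
    (if Squarefree (2 * d) then J(8 * d | n) else 0) =
      if Squarefree d ∧ d.Coprime (2 * n) then 1 else 0 := by
  have gcd_eq_one_iff : Int.gcd (8 * d) n = 1 ↔ d.Coprime n := by
    have h8 : Nat.Coprime 8 n := (Nat.coprime_two_left.2 hodd).pow_left 3
    rw [Nat.Coprime, ← h8.gcd_mul_left_cancel d]
    exact_mod_cast Iff.rfl
  simp only [jacobiSym_of_isSquare hn hodd.pos.ne', gcd_eq_one_iff, ← ite_and,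
    Nat.squarefree_mul_iff, Nat.prime_two.prime.squarefree, Nat.coprime_mul_iff_right,
    Nat.coprime_comm (m := d)]
  congr 1
  exact propext (by tauto)

lemma sum_squarefree_jacobiSym_eq_card {n : ℕ} (hodd : Odd n) (hn : IsSquare n) (Z : ℕ) :
    ∑ d ∈ Icc 1 Z, (if Squarefree (2 * d) then J(8 * d | n) else 0) =
      #{d ∈ Ioc 0 Z | Squarefree d ∧ d.Coprime (2 * n)} := by
  simp_rw [ite_squarefree_jacobiSym_eq hodd hn, sum_boole]
  rfl

theorem quadratic_character_sum_square_asymptotic_general {ε : ℝ} (hε : 0 < ε) :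
    ∃ C : ℝ, 0 < C ∧ ∀ (n : ℕ) (z : ℝ), Odd n → IsSquare n → 0 ≤ z →
      |(∑ d ∈ Icc 1 ⌊z⌋₊, if Squarefree (2 * d) then ((J(8 * d | n) : ℤ) : ℝ) else 0) -
          z / (Real.pi ^ 2 / 6) * ∏ p ∈ (2 * n).primeFactors, (p : ℝ) / (p + 1)| ≤
        C * √z * (n : ℝ) ^ ε := by
  obtain ⟨C, hC, two_pow_le⟩ := exists_pow_card_primeFactors_le one_le_two hε
  refine ⟨3 * C * 2 ^ ε, by positivity, fun n z hodd hn hz ↦ ?_⟩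
  have hN : 2 * n ≠ 0 := mul_ne_zero two_ne_zero hodd.pos.ne'
  have sum_eq : (∑ d ∈ Icc 1 ⌊z⌋₊, if Squarefree (2 * d) then ((J(8 * d | n) : ℤ) : ℝ) else 0) =
      #{d ∈ Ioc 0 ⌊z⌋₊ | Squarefree d ∧ d.Coprime (2 * n)} := by
    exact_mod_cast sum_squarefree_jacobiSym_eq_card hodd hn ⌊z⌋₊
  rw [sum_eq]
  calc _ ≤ 3 * √z * 2 ^ #(2 * n).primeFactors := abs_card_squarefree_coprime_sub_le hN hz
    _ ≤ 3 * √z * (C * ((2 * n : ℕ) : ℝ) ^ ε) := by gcongr; exact two_pow_le _ hN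
    _ = 3 * C * 2 ^ ε * √z * (n : ℝ) ^ ε := by
        rw [Nat.cast_mul, Nat.cast_ofNat, Real.mul_rpow zero_le_two n.cast_nonneg]
        ring

/-- For odd positive square `n` and `z ≥ 3`,
`∑_{d ≤ z} μ²(2d) (8d|n) = (z/ζ(2)) ∏_{p ∣ 2n} p/(p+1) + O_ε(z^{1/2+ε} n^ε)`,
where `ζ(2) = π²/6` and the product is over primes dividing `2n`. -/
theorem quadratic_character_sum_square_asymptotic :
    ∀ ε : ℝ, 0 < ε → ∃ C : ℝ, 0 < C ∧
      ∀ (n : ℕ) (z : ℝ), 0 < n → Odd n → IsSquare n → 3 ≤ z →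
        |(∑ d ∈ Finset.Icc 1 ⌊z⌋₊,
            if Squarefree (2 * d) then ((jacobiSym (8 * d) n : ℤ) : ℝ) else 0) -
          z / (Real.pi ^ 2 / 6) * ∏ p ∈ (2 * n).primeFactors, (p : ℝ) / (p + 1)| ≤
        C * z ^ ((1 : ℝ) / 2 + ε) * (n : ℝ) ^ ε := by
  intro ε hε
  obtain ⟨C, hC, h⟩ := quadratic_character_sum_square_asymptotic_general hε
  refine ⟨C, hC, fun n z _ hodd hn hz ↦ (h n z hodd hn (by linarith)).trans ?_⟩
  rw [Real.sqrt_eq_rpow]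
  gcongr <;> linarith
end

section
/- Let B_r be the multiplicative function with B_r(p) = 0, B_r(p²) = r(r-1)/2, and B_r(p^a) bounded polynomially in a uniformly in p, and B_r(n) = 0 unless n is a square. Then as z → ∞, Σ_{n ≤ z} B_r(n)/√n ∼ C_r (log z)^{r(r-1)/2} for some constant C_r > 0. -/
open Filter

/-!
Put `F(m) = B(m²) / m`, so that `∑_{n ≤ z} B(n) / √n = ∑_{m ≤ √z} F(m)`, and let
`k = r (r - 1) / 2`. As `F(p) = k / p`, the Dirichlet convolution `G` of `F` with the `k`-th
convolution power of `μ(n) / n` vanishes at the primes, which makes `∑ G(n)` absolutely convergent.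
Conversely `F` is the convolution of `G` with the `k`-th convolution power of `1 / n`, whose partial
sums lie between `(log x) ^ k / k!` and `(log x + k) ^ k / k!`. Dominated convergence then gives
`∑_{m ≤ x} F(m) ∼ (∑ G(n)) (log x) ^ k / k!`, and `∑ G(n)` is the Euler product
`∏ₚ (1 - 1/p) ^ k ∑ₐ F(p ^ a)`, which converges and has positive factors.
-/

section

open ArithmeticFunction Finset
open scoped ArithmeticFunction.Moebius ArithmeticFunction.zeta Nat Real Topology

/-- The arithmetic function `n ↦ 1 / n`, whose Dirichlet series is `ζ(s + 1)`. -/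
noncomputable def natRecip : ArithmeticFunction ℝ := ⟨fun n ↦ (n : ℝ)⁻¹, by simp⟩

lemma natRecip_apply (n : ℕ) : natRecip n = (n : ℝ)⁻¹ := rfl

lemma natRecip_pow_nonneg (k n : ℕ) : 0 ≤ (natRecip ^ k) n := by
  induction k generalizing n with
  | zero => rw [pow_zero, one_apply]; positivity
  | succ k ih =>
    rw [pow_succ, mul_apply]
    exact sum_nonneg fun d _ ↦ mul_nonneg (ih d.1) (inv_nonneg.2 d.2.cast_nonneg)

lemma add_mul_sub_le_pow {a b : ℝ} (ha : 0 ≤ a) (hb : 0 ≤ b) (m : ℕ) :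
    a ^ (m + 1) + (m + 1) * a ^ m * (b - a) ≤ b ^ (m + 1) := by
  induction m with
  | zero => simp
  | succ m ih =>
    calc a ^ (m + 1 + 1) + ((m + 1 : ℕ) + 1) * a ^ (m + 1) * (b - a)
        = b * (a ^ (m + 1) + (m + 1) * a ^ m * (b - a)) - (m + 1) * a ^ m * (b - a) ^ 2 := by
          push_cast; ring
      _ ≤ b * b ^ (m + 1) - 0 := by gcongr; positivity
      _ = b ^ (m + 1 + 1) := by ring

-- With `log⁺` in place of `log` the terms `n > x` vanish, so the induction on `N` is unrestricted.
lemma posLog_pow_sub_le_sum (k : ℕ) (x : ℝ) (N : ℕ) :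
    log⁺ x ^ (k + 1) - log⁺ (x / (N + 1 : ℕ)) ^ (k + 1) ≤
      (k + 1) * ∑ n ∈ Ioc 0 N, (n : ℝ)⁻¹ * log⁺ (x / n) ^ k := by
  induction N with
  | zero => simp
  | succ N ih =>
    set u := log⁺ (x / (N + 1 : ℕ))
    set v := log⁺ (x / (N + 1 + 1 : ℕ))
    have hN : (0 : ℝ) < (N + 1 : ℕ) := by positivity
    have huv : u - v ≤ ((N + 1 : ℕ) : ℝ)⁻¹ := by
      have hratio : (1 : ℝ) ≤ (N + 1 + 1 : ℕ) / (N + 1 : ℕ) := by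
        rw [one_le_div hN]; push_cast; linarith
      calc u - v = log⁺ (x / (N + 1 + 1 : ℕ) * ((N + 1 + 1 : ℕ) / (N + 1 : ℕ))) - v := by
            rw [div_mul_div_cancel₀ (by positivity)]
        _ ≤ log⁺ ((N + 1 + 1 : ℕ) / (N + 1 : ℕ)) := sub_le_iff_le_add'.2 Real.posLog_mul
        _ = Real.log ((N + 1 + 1 : ℕ) / (N + 1 : ℕ)) :=
            Real.posLog_eq_log (hratio.trans (le_abs_self _))
        _ ≤ (N + 1 + 1 : ℕ) / (N + 1 : ℕ) - 1 := Real.log_le_sub_one_of_pos (by positivity)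
        _ = ((N + 1 : ℕ) : ℝ)⁻¹ := by push_cast; field_simp; ring
    have hstep : u ^ (k + 1) - v ^ (k + 1) ≤ (k + 1) * (((N + 1 : ℕ) : ℝ)⁻¹ * u ^ k) :=
      calc u ^ (k + 1) - v ^ (k + 1) ≤ (k + 1) * u ^ k * (u - v) := by
            linarith [add_mul_sub_le_pow (a := u) (b := v)
              Real.posLog_nonneg Real.posLog_nonneg k]
        _ ≤ (k + 1) * u ^ k * ((N + 1 : ℕ) : ℝ)⁻¹ := by
            gcongr; exact mul_nonneg (by positivity) (pow_nonneg Real.posLog_nonneg k)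
        _ = _ := by ring
    rw [sum_Ioc_succ_top N.zero_le, mul_add]
    linarith

lemma one_le_div_natCast_of_mem_Ioc_floor {x : ℝ} {n : ℕ} (hn : n ∈ Ioc 0 ⌊x⌋₊) :
    1 ≤ x / n := by
  obtain ⟨hn0, hnx⟩ := mem_Ioc.1 hn
  rw [one_le_div (by exact_mod_cast hn0)]
  exact (Nat.le_floor_iff' hn0.ne').1 hnx

lemma log_pow_le_sum (k : ℕ) {x : ℝ} (hx : 1 ≤ x) :
    Real.log x ^ (k + 1) ≤ (k + 1) * ∑ n ∈ Ioc 0 ⌊x⌋₊, (n : ℝ)⁻¹ * Real.log (x / n) ^ k := by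
  have hx0 : 0 ≤ x := zero_le_one.trans hx
  have hend : log⁺ (x / (⌊x⌋₊ + 1 : ℕ)) = 0 := by
    rw [Real.posLog_eq_zero_iff, abs_of_nonneg (div_nonneg hx0 (Nat.cast_nonneg _)),
      div_le_one (by positivity)]
    exact_mod_cast (Nat.lt_floor_add_one x).le
  have hlog : ∀ n ∈ Ioc 0 ⌊x⌋₊, log⁺ (x / n) = Real.log (x / n) := fun n hn ↦
    Real.posLog_eq_log ((one_le_div_natCast_of_mem_Ioc_floor hn).trans (le_abs_self _))
  have h := posLog_pow_sub_le_sum k x ⌊x⌋₊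
  rwa [hend, zero_pow k.succ_ne_zero, sub_zero, sum_congr rfl fun n hn ↦ by rw [hlog n hn],
    Real.posLog_eq_log (hx.trans (le_abs_self _))] at h

lemma sum_mul_log_add_pow_le (k : ℕ) {x c : ℝ} (hc : 0 ≤ c) (N : ℕ) (hN : (N + 1 : ℕ) ≤ x) :
    (k + 1) * ∑ n ∈ Ioc 0 (N + 1), (n : ℝ)⁻¹ * (Real.log (x / n) + c) ^ k ≤
      (k + 1) * (Real.log x + c) ^ k + (Real.log x + c) ^ (k + 1)
        - (Real.log (x / (N + 1 : ℕ)) + c) ^ (k + 1) := by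
  induction N with
  | zero => simp
  | succ N ih =>
    have hN₁ : (0 : ℝ) < (N + 1 : ℕ) := by positivity
    have hN₂ : (0 : ℝ) < (N + 1 + 1 : ℕ) := by positivity
    have hNN : ((N + 1 : ℕ) : ℝ) ≤ (N + 1 + 1 : ℕ) := by push_cast; linarith
    have hx : 0 < x := hN₂.trans_le hN
    set u := Real.log (x / (N + 1 : ℕ)) + c
    set v := Real.log (x / (N + 1 + 1 : ℕ)) + c
    have hu : 0 ≤ u := add_nonneg (Real.log_nonneg ((one_le_div hN₁).2 (hNN.trans hN))) hc
    have hv : 0 ≤ v := add_nonneg (Real.log_nonneg ((one_le_div hN₂).2 hN)) hc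
    have huv : ((N + 1 + 1 : ℕ) : ℝ)⁻¹ ≤ u - v :=
      calc ((N + 1 + 1 : ℕ) : ℝ)⁻¹ = 1 - ((N + 1 + 1 : ℕ) / (N + 1 : ℕ) : ℝ)⁻¹ := by
            push_cast; field_simp; ring
        _ ≤ Real.log ((N + 1 + 1 : ℕ) / (N + 1 : ℕ)) :=
            Real.one_sub_inv_le_log_of_pos (by positivity)
        _ = u - v := by
            simp only [u, v, Real.log_div hN₂.ne' hN₁.ne', Real.log_div hx.ne' hN₁.ne',
              Real.log_div hx.ne' hN₂.ne']
            ring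
    have hstep : (k + 1) * (((N + 1 + 1 : ℕ) : ℝ)⁻¹ * v ^ k) ≤ u ^ (k + 1) - v ^ (k + 1) :=
      calc (k + 1) * (((N + 1 + 1 : ℕ) : ℝ)⁻¹ * v ^ k)
          ≤ (k + 1) * ((u - v) * v ^ k) := by gcongr
        _ ≤ u ^ (k + 1) - v ^ (k + 1) := by linarith [add_mul_sub_le_pow hv hu k]
    rw [sum_Ioc_succ_top (N + 1).zero_le, mul_add]
    linarith [ih (hNN.trans hN)]

lemma sum_floor_mul_log_add_pow_le (k : ℕ) {x c : ℝ} (hc : 0 ≤ c) (hx : 1 ≤ x) :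
    (k + 1) * ∑ n ∈ Ioc 0 ⌊x⌋₊, (n : ℝ)⁻¹ * (Real.log (x / n) + c) ^ k ≤
      (Real.log x + c + 1) ^ (k + 1) := by
  have hx0 : 0 ≤ x := zero_le_one.trans hx
  obtain ⟨N, hN⟩ := Nat.exists_eq_add_one.2 (Nat.floor_pos.2 hx)
  have hNx : (N + 1 : ℕ) ≤ x := hN ▸ Nat.floor_le hx0
  have hL : 0 ≤ Real.log x + c := add_nonneg (Real.log_nonneg hx) hc
  have hlast : 0 ≤ (Real.log (x / (N + 1 : ℕ)) + c) ^ (k + 1) :=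
    pow_nonneg (add_nonneg (Real.log_nonneg ((one_le_div (by positivity)).2 hNx)) hc) _
  have htangent := add_mul_sub_le_pow hL (by positivity : 0 ≤ Real.log x + c + 1) k
  rw [hN]
  linarith [sum_mul_log_add_pow_le k hc N hNx]

lemma sum_Ioc_floor_mul (F H : ArithmeticFunction ℝ) (x : ℝ) :
    ∑ n ∈ Ioc 0 ⌊x⌋₊, (F * H) n =
      ∑ d ∈ Ioc 0 ⌊x⌋₊, F d * ∑ n ∈ Ioc 0 ⌊x / d⌋₊, H n := by
  simp_rw [Nat.floor_div_natCast]
  exact sum_Ioc_mul_eq_sum_sum F H ⌊x⌋₊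

lemma factorial_succ_mul_sum_natRecip_pow_succ (k : ℕ) (x : ℝ) :
    (k + 1)! * ∑ n ∈ Ioc 0 ⌊x⌋₊, (natRecip ^ (k + 1)) n =
      (k + 1) * ∑ d ∈ Ioc 0 ⌊x⌋₊, (d : ℝ)⁻¹ *
        (k ! * ∑ n ∈ Ioc 0 ⌊x / d⌋₊, (natRecip ^ k) n) := by
  rw [pow_succ', sum_Ioc_floor_mul, Nat.factorial_succ, Nat.cast_mul, mul_assoc, mul_sum,
    Nat.cast_succ]
  exact congrArg _ (sum_congr rfl fun d _ ↦ mul_left_comm _ _ _)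

lemma log_pow_le_factorial_mul_sum_natRecip_pow (k : ℕ) {x : ℝ} (hx : 1 ≤ x) :
    Real.log x ^ k ≤ k ! * ∑ n ∈ Ioc 0 ⌊x⌋₊, (natRecip ^ k) n := by
  induction k generalizing x with
  | zero => simp [one_apply, hx]
  | succ k ih =>
    rw [factorial_succ_mul_sum_natRecip_pow_succ]
    refine (log_pow_le_sum k hx).trans ?_
    gcongr with d hd
    exact ih (one_le_div_natCast_of_mem_Ioc_floor hd)

lemma factorial_mul_sum_natRecip_pow_le (k : ℕ) {x : ℝ} (hx : 1 ≤ x) :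
    k ! * ∑ n ∈ Ioc 0 ⌊x⌋₊, (natRecip ^ k) n ≤ (Real.log x + k) ^ k := by
  induction k generalizing x with
  | zero => simp [one_apply, hx]
  | succ k ih =>
    rw [factorial_succ_mul_sum_natRecip_pow_succ, Nat.cast_succ, ← add_assoc]
    refine le_trans ?_ (sum_floor_mul_log_add_pow_le k k.cast_nonneg hx)
    gcongr with d hd
    exact ih (one_le_div_natCast_of_mem_Ioc_floor hd)

lemma tendsto_log_add_pow_div_log_pow (c : ℝ) (k : ℕ) :
    Tendsto (fun x : ℝ ↦ (Real.log x + c) ^ k / Real.log x ^ k) atTop (𝓝 1) := by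
  have h : Tendsto (fun x : ℝ ↦ (1 + c / Real.log x) ^ k) atTop (𝓝 1) := by
    simpa using ((Real.tendsto_log_atTop.const_div_atTop c).const_add 1).pow k
  refine h.congr' ?_
  filter_upwards [eventually_gt_atTop 1] with x hx
  rw [← div_pow, add_div, div_self (Real.log_pos hx).ne']

lemma tendsto_sum_natRecip_pow_div_log_pow (k : ℕ) {d : ℕ} (hd : 0 < d) :
    Tendsto (fun x : ℝ ↦ (∑ n ∈ Ioc 0 ⌊x / d⌋₊, (natRecip ^ k) n) / Real.log x ^ k) atTop
      (𝓝 (k ! : ℝ)⁻¹) := by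
  have hd₀ : (0 : ℝ) < d := by exact_mod_cast hd
  suffices Tendsto (fun x : ℝ ↦ k ! * (∑ n ∈ Ioc 0 ⌊x / d⌋₊, (natRecip ^ k) n) / Real.log x ^ k)
      atTop (𝓝 1) by
    have hk : (k ! : ℝ) ≠ 0 := by positivity
    simpa [mul_div_assoc, hk] using this.const_mul (k ! : ℝ)⁻¹
  have hlarge : ∀ᶠ x : ℝ in atTop, 1 ≤ x / d ∧ Real.log (x / d) = Real.log x + -Real.log d ∧
      0 ≤ Real.log x ^ k := by
    filter_upwards [eventually_gt_atTop 1, eventually_ge_atTop (d : ℝ)] with x hx hxd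
    exact ⟨(one_le_div hd₀).2 hxd, Real.log_div (by positivity) hd₀.ne',
      pow_nonneg (Real.log_pos hx).le k⟩
  refine tendsto_of_tendsto_of_tendsto_of_le_of_le'
    (tendsto_log_add_pow_div_log_pow (-Real.log d) k)
    (tendsto_log_add_pow_div_log_pow (-Real.log d + k) k) ?_ ?_
  · filter_upwards [hlarge] with x ⟨hxd, hlog, hpos⟩
    rw [← hlog]
    gcongr
    exact log_pow_le_factorial_mul_sum_natRecip_pow k hxd
  · filter_upwards [hlarge] with x ⟨hxd, hlog, hpos⟩
    rw [← add_assoc, ← hlog]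
    gcongr
    exact factorial_mul_sum_natRecip_pow_le k hxd

lemma norm_sum_natRecip_pow_div_log_pow_le (k d : ℕ) {x : ℝ} (hx : Real.exp 1 ≤ x) :
    ‖(∑ n ∈ Ioc 0 ⌊x / d⌋₊, (natRecip ^ k) n) / Real.log x ^ k‖ ≤ (1 + k) ^ k := by
  have hx₀ : 0 < x := (Real.exp_pos 1).trans_le hx
  have hx₁ : 1 ≤ x := (Real.one_le_exp zero_le_one).trans hx
  have hlog : 1 ≤ Real.log x := (Real.le_log_iff_exp_le hx₀).2 hx
  have hnn := natRecip_pow_nonneg k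
  have hS : 0 ≤ ∑ n ∈ Ioc 0 ⌊x⌋₊, (natRecip ^ k) n := sum_nonneg fun n _ ↦ hnn n
  rw [Real.norm_of_nonneg (div_nonneg (sum_nonneg fun n _ ↦ hnn n) (by positivity)),
    div_le_iff₀ (by positivity), ← mul_pow]
  calc ∑ n ∈ Ioc 0 ⌊x / d⌋₊, (natRecip ^ k) n
      ≤ ∑ n ∈ Ioc 0 ⌊x⌋₊, (natRecip ^ k) n := by
        refine sum_le_sum_of_subset_of_nonneg (Ioc_subset_Ioc_right ?_) fun n _ _ ↦ hnn n
        rw [Nat.floor_div_natCast]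
        exact Nat.div_le_self _ _
    _ ≤ k ! * ∑ n ∈ Ioc 0 ⌊x⌋₊, (natRecip ^ k) n :=
        le_mul_of_one_le_left hS (by exact_mod_cast k.factorial_pos)
    _ ≤ (Real.log x + k) ^ k := factorial_mul_sum_natRecip_pow_le k hx₁
    _ ≤ ((1 + k) * Real.log x) ^ k := by
        gcongr
        linarith [mul_le_mul_of_nonneg_left hlog k.cast_nonneg]

lemma tendsto_sum_mul_natRecip_pow_div_log_pow {G : ArithmeticFunction ℝ}
    (hG : Summable fun n ↦ ‖G n‖) (k : ℕ) :
    Tendsto (fun x : ℝ ↦ (∑ n ∈ Ioc 0 ⌊x⌋₊, (G * natRecip ^ k) n) / Real.log x ^ k) atTop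
      (𝓝 ((∑' n, G n) / k !)) := by
  have hsum (x : ℝ) : (∑ n ∈ Ioc 0 ⌊x⌋₊, (G * natRecip ^ k) n) / Real.log x ^ k =
      ∑' d, G d * ((∑ n ∈ Ioc 0 ⌊x / d⌋₊, (natRecip ^ k) n) / Real.log x ^ k) := by
    rw [sum_Ioc_floor_mul, sum_div, tsum_eq_sum fun d hd ↦ ?_]
    · exact sum_congr rfl fun d _ ↦ mul_div_assoc _ _ _
    · obtain rfl | hd₀ := d.eq_zero_or_pos
      · simp
      · rw [Nat.floor_div_natCast, Nat.div_eq_of_lt (by simpa [hd₀] using hd)]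
        simp
  simp_rw [hsum, div_eq_mul_inv (∑' n, G n), ← tsum_mul_right]
  refine tendsto_tsum_of_dominated_convergence (hG.mul_right ((1 + k : ℝ) ^ k)) (fun d ↦ ?_) ?_
  · obtain rfl | hd := d.eq_zero_or_pos
    · simp
    · exact (tendsto_sum_natRecip_pow_div_log_pow k hd).const_mul _
  · filter_upwards [eventually_ge_atTop (Real.exp 1)] with x hx d
    rw [norm_mul]
    gcongr
    exact norm_sum_natRecip_pow_div_log_pow_le k d hx

lemma summable_prod_nat_of_succ {β M : Type*} [AddCommMonoid M] [TopologicalSpace M]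
    [ContinuousAdd M] {u : β × ℕ → M} (hzero : Summable fun b ↦ u (b, 0))
    (hsucc : Summable fun q : β × ℕ ↦ u (q.1, q.2 + 1)) : Summable u := by
  let e : (β × ℕ) ⊕ β ≃ β × ℕ :=
    ((Equiv.refl (β × ℕ)).sumCongr (Equiv.prodPUnit.{0} β).symm).trans
      ((Equiv.prodSumDistrib β ℕ PUnit.{1}).symm.trans
        ((Equiv.refl β).prodCongr Equiv.natSumPUnitEquivNat))
  exact e.summable_iff.1 (Summable.sum (f := u ∘ e) hsucc hzero)

lemma summable_primes_sq_inv : Summable fun p : Nat.Primes ↦ ((p : ℝ) ^ 2)⁻¹ :=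
  (Real.summable_nat_pow_inv.2 one_lt_two).comp_injective Nat.Primes.coe_nat_injective

lemma summable_norm_of_isMultiplicative {K : Type*} [NormedField K]
    {f : ArithmeticFunction K} (hf : f.IsMultiplicative)
    (hs : Summable fun q : Nat.Primes × ℕ ↦ ‖f (q.1 ^ (q.2 + 1))‖) :
    Summable fun n ↦ ‖f n‖ := by
  set T : ℕ → ℝ := fun p ↦ ∑' a, ‖f (p ^ (a + 1))‖
  have hT : Summable fun p : Nat.Primes ↦ T p := hs.prod
  have hT₀ (p : ℕ) : 0 ≤ T p := tsum_nonneg fun a ↦ norm_nonneg _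
  have hpow {p : ℕ} (hp : p.Prime) : Summable fun a ↦ ‖f (p ^ a)‖ :=
    (summable_nat_add_iff 1).1 (hs.prod_factor ⟨p, hp⟩)
  refine summable_of_sum_range_le (c := Real.exp (∑' p : Nat.Primes, T p))
    (fun n ↦ norm_nonneg _) fun N ↦ ?_
  have hsmooth := (EulerProduct.summable_and_hasSum_smoothNumbers_prod_primesBelow_tsum
    (f := fun n ↦ ‖f n‖) (by simp [hf.map_one])
    (fun h ↦ by rw [hf.map_mul_of_coprime h, norm_mul]) (fun hp ↦ by simpa using hpow hp) N).2
  calc ∑ n ∈ range N, ‖f n‖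
      ≤ ∑ n ∈ range N, (N.smoothNumbers).indicator (fun n ↦ ‖f n‖) n := by
        refine sum_le_sum fun n hn ↦ ?_
        obtain rfl | hn₀ := n.eq_zero_or_pos
        · simpa using Set.indicator_nonneg (fun n _ ↦ norm_nonneg (f n)) 0
        · rw [Set.indicator_of_mem (Nat.mem_smoothNumbers_of_lt hn₀ (mem_range.1 hn))]
    _ ≤ ∏ p ∈ N.primesBelow, ∑' a, ‖f (p ^ a)‖ :=
        sum_le_hasSum _ (fun n _ ↦ Set.indicator_nonneg (fun n _ ↦ norm_nonneg (f n)) n)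
          (hasSum_subtype_iff_indicator.1 hsmooth)
    _ = ∏ p ∈ N.primesBelow, (1 + T p) := by
        refine prod_congr rfl fun p hp ↦ ?_
        rw [(hpow (Nat.prime_of_mem_primesBelow hp)).tsum_eq_zero_add, pow_zero, hf.map_one,
          norm_one]
    _ ≤ Real.exp (∑ p ∈ N.primesBelow, T p) := Real.prod_one_add_le_exp_sum _ hT₀
    _ ≤ Real.exp (∑' p : Nat.Primes, T p) := by
        gcongr
        rw [← sum_subtype_of_mem T fun p hp ↦ Nat.prime_of_mem_primesBelow hp]
        exact Summable.sum_le_tsum (ι := Nat.Primes) _ (fun p _ ↦ hT₀ p) hT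

lemma tprod_one_add_pos {ι : Type*} {t : ι → ℝ} (ht : Summable t) (hpos : ∀ i, 0 < 1 + t i) :
    0 < ∏' i, (1 + t i) :=
  Real.rexp_tsum_eq_tprod hpos (Real.summable_log_one_add_of_summable ht) ▸ Real.exp_pos _

/-- The arithmetic function `n ↦ μ(n) / n`, the inverse of `natRecip`. -/
noncomputable def moebiusRecip : ArithmeticFunction ℝ := natRecip.pmul μ

lemma isMultiplicative_natRecip : natRecip.IsMultiplicative :=
  ⟨by simp [natRecip_apply], fun _ ↦ by simp [natRecip_apply, mul_comm]⟩

lemma isMultiplicative_moebiusRecip : moebiusRecip.IsMultiplicative :=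
  isMultiplicative_natRecip.pmul isMultiplicative_moebius.intCast

lemma moebiusRecip_mul_natRecip : moebiusRecip * natRecip = 1 := by
  have hpmul : moebiusRecip * natRecip = natRecip.pmul ((μ : ArithmeticFunction ℝ) * ζ) := by
    ext n
    rw [pmul_apply, mul_apply, mul_apply, mul_sum]
    refine sum_congr rfl fun q hq ↦ ?_
    obtain ⟨hqn, hn⟩ := Nat.mem_divisorsAntidiagonal.1 hq
    have hq₂ : q.2 ≠ 0 := right_ne_zero_of_mul (hqn ▸ hn)
    simp only [moebiusRecip, pmul_apply, natRecip_apply, ← hqn, natCoe_apply, zeta_apply_ne hq₂,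
      Nat.cast_mul, Nat.cast_one, mul_one, mul_inv]
    ring
  ext n
  obtain rfl | hn := eq_or_ne n 1
  · simp [hpmul, natRecip_apply]
  · simp [hpmul, one_apply_ne hn]

lemma moebiusRecip_prime {p : ℕ} (hp : p.Prime) : moebiusRecip p = -(p : ℝ)⁻¹ := by
  simp [moebiusRecip, natRecip_apply, moebius_apply_prime hp]

lemma moebiusRecip_prime_pow_add_two {p : ℕ} (hp : p.Prime) (a : ℕ) :
    moebiusRecip (p ^ (a + 2)) = 0 := by
  simp [moebiusRecip, moebius_apply_prime_pow hp]

lemma mul_moebiusRecip_prime_pow_succ (F : ArithmeticFunction ℝ) {p : ℕ} (hp : p.Prime) (a : ℕ) :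
    (F * moebiusRecip) (p ^ (a + 1)) = F (p ^ (a + 1)) - F (p ^ a) / p := by
  rw [mul_apply, Nat.sum_divisorsAntidiagonal' (fun m n ↦ F m * moebiusRecip n),
    Nat.sum_divisors_prime_pow hp, sum_range_succ', sum_range_succ']
  have hdiv : p ^ (a + 1) / p = p ^ a := by rw [pow_succ, Nat.mul_div_cancel _ hp.pos]
  simp only [moebiusRecip_prime_pow_add_two hp, mul_zero, sum_const_zero, zero_add, pow_one,
    pow_zero, Nat.div_one, hdiv, moebiusRecip_prime hp, isMultiplicative_moebiusRecip.map_one]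
  ring

/-- `F` is a multiplicative function of *dimension* `κ` in the sense of sieve theory: its Dirichlet
series `∑ F(n) n⁻ˢ` behaves at `s = 0` like `ζ(s + 1) ^ κ`. Here this is encoded by the exact value
`κ / p` at the primes and absolute convergence over the higher prime powers `p ^ (a + 2)`. -/
structure HasDimension (κ : ℝ) (F : ArithmeticFunction ℝ) : Prop where
  isMultiplicative : F.IsMultiplicative
  apply_prime (p : Nat.Primes) : F p = κ / p
  summable_prime_pow : Summable fun q : Nat.Primes × ℕ ↦ ‖F (q.1 ^ (q.2 + 2))‖

namespace HasDimension

variable {κ : ℝ} {F : ArithmeticFunction ℝ}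

lemma summable_pow (hF : HasDimension κ F) (p : Nat.Primes) : Summable fun a ↦ F (p ^ a) :=
  (summable_nat_add_iff (f := fun a ↦ F (p ^ a)) 2).1 (hF.summable_prime_pow.prod_factor p).of_norm

lemma mul_moebiusRecip (hF : HasDimension κ F) : HasDimension (κ - 1) (F * moebiusRecip) where
  isMultiplicative := hF.isMultiplicative.mul isMultiplicative_moebiusRecip
  apply_prime p := by
    have h := mul_moebiusRecip_prime_pow_succ F p.2 0
    rw [zero_add, pow_one, pow_zero, hF.isMultiplicative.map_one, hF.apply_prime] at h
    rw [h, sub_div]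
  summable_prime_pow := by
    have hdiv : Summable fun q : Nat.Primes × ℕ ↦ ‖F (q.1 ^ (q.2 + 1)) / q.1‖ := by
      refine summable_prod_nat_of_succ ?_ ?_
      · refine (summable_primes_sq_inv.mul_left |κ|).congr fun p ↦ ?_
        simp [hF.apply_prime, sq, div_eq_mul_inv, mul_assoc]
      · refine hF.summable_prime_pow.of_nonneg_of_le (fun q ↦ norm_nonneg _) fun q ↦ ?_
        rw [norm_div]
        refine div_le_self (norm_nonneg _) ?_
        simpa using q.1.2.one_lt.le
    refine (hF.summable_prime_pow.add hdiv).of_nonneg_of_le (fun q ↦ norm_nonneg _) fun q ↦ ?_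
    rw [mul_moebiusRecip_prime_pow_succ F q.1.2]
    exact norm_sub_le _ _

lemma mul_moebiusRecip_pow (hF : HasDimension κ F) (k : ℕ) :
    HasDimension (κ - k) (F * moebiusRecip ^ k) := by
  induction k with
  | zero => simpa using hF
  | succ k ih => simpa [pow_succ, mul_assoc, sub_sub] using ih.mul_moebiusRecip

lemma tsum_pow_eq_one_add (hF : HasDimension κ F) (p : Nat.Primes) :
    ∑' a, F (p ^ a) = 1 + ∑' a, F (p ^ (a + 1)) := by
  rw [(hF.summable_pow p).tsum_eq_zero_add, pow_zero, hF.isMultiplicative.map_one]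

lemma tsum_mul_moebiusRecip (hF : HasDimension κ F) (p : Nat.Primes) :
    ∑' a, (F * moebiusRecip) (p ^ a) = (1 - (p : ℝ)⁻¹) * ∑' a, F (p ^ a) := by
  have hS := hF.summable_pow p
  rw [hF.mul_moebiusRecip.tsum_pow_eq_one_add]
  simp_rw [mul_moebiusRecip_prime_pow_succ F p.2]
  rw [((summable_nat_add_iff 1).2 hS).tsum_sub (hS.div_const _), tsum_div_const]
  linear_combination -hF.tsum_pow_eq_one_add p

lemma tsum_mul_moebiusRecip_pow (hF : HasDimension κ F) (k : ℕ) (p : Nat.Primes) :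
    ∑' a, (F * moebiusRecip ^ k) (p ^ a) = (1 - (p : ℝ)⁻¹) ^ k * ∑' a, F (p ^ a) := by
  induction k with
  | zero => simp
  | succ k ih =>
    rw [pow_succ, ← mul_assoc, (hF.mul_moebiusRecip_pow k).tsum_mul_moebiusRecip, ih, pow_succ']
    ring

lemma summable_prime_pow_succ (hF : HasDimension 0 F) :
    Summable fun q : Nat.Primes × ℕ ↦ ‖F (q.1 ^ (q.2 + 1))‖ :=
  summable_prod_nat_of_succ (by simp [hF.apply_prime]) hF.summable_prime_pow

lemma summable_norm (hF : HasDimension 0 F) : Summable fun n ↦ ‖F n‖ :=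
  summable_norm_of_isMultiplicative hF.isMultiplicative hF.summable_prime_pow_succ

lemma tprod_tsum_pos (hF : HasDimension 0 F) (hpos : ∀ p : Nat.Primes, 0 < ∑' a, F (p ^ a)) :
    0 < ∏' p : Nat.Primes, ∑' a, F (p ^ a) := by
  simp_rw [hF.tsum_pow_eq_one_add] at hpos ⊢
  exact tprod_one_add_pos hF.summable_prime_pow_succ.of_norm.prod hpos

lemma tsum_pow_pos_of_nonneg (hF : HasDimension κ F) (hnn : ∀ n, 0 ≤ F n) (p : Nat.Primes) :
    0 < ∑' a, F (p ^ a) :=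
  (hF.summable_pow p).tsum_pos (fun a ↦ hnn _) 0 (by simp [hF.isMultiplicative.map_one])

end HasDimension

/-- The Euler product `∏ₚ (1 - 1/p) ^ k ∑ₐ F(p ^ a)`, which regularises `∑ F(n)` when `F` has
dimension `k`. -/
noncomputable def eulerConst (k : ℕ) (F : ArithmeticFunction ℝ) : ℝ :=
  ∏' p : Nat.Primes, (1 - (p : ℝ)⁻¹) ^ k * ∑' a, F (p ^ a)

namespace HasDimension

variable {k : ℕ} {F : ArithmeticFunction ℝ}

lemma mul_moebiusRecip_pow_self (hF : HasDimension k F) :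
    HasDimension 0 (F * moebiusRecip ^ k) := by
  simpa using hF.mul_moebiusRecip_pow k

lemma eulerConst_pos (hF : HasDimension k F) (hpos : ∀ p : Nat.Primes, 0 < ∑' a, F (p ^ a)) :
    0 < eulerConst k F := by
  simp_rw [eulerConst, ← hF.tsum_mul_moebiusRecip_pow]
  refine hF.mul_moebiusRecip_pow_self.tprod_tsum_pos fun p ↦ ?_
  rw [hF.tsum_mul_moebiusRecip_pow]
  have hp : (p : ℝ)⁻¹ < 1 := inv_lt_one_of_one_lt₀ (by exact_mod_cast p.2.one_lt)
  exact mul_pos (pow_pos (sub_pos.2 hp) k) (hpos p)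

theorem tendsto_sum_div_log_pow (hF : HasDimension k F) :
    Tendsto (fun x : ℝ ↦ (∑ n ∈ Ioc 0 ⌊x⌋₊, F n) / Real.log x ^ k) atTop
      (𝓝 (eulerConst k F / k !)) := by
  have hG := hF.mul_moebiusRecip_pow_self
  have hFG : F * moebiusRecip ^ k * natRecip ^ k = F := by
    rw [mul_assoc, ← mul_pow, moebiusRecip_mul_natRecip, one_pow, mul_one]
  have hconst : ∑' n, (F * moebiusRecip ^ k) n = eulerConst k F := by
    simp_rw [eulerConst, ← hF.tsum_mul_moebiusRecip_pow]
    exact (hG.isMultiplicative.eulerProduct_tprod hG.summable_norm).symm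
  have h := tendsto_sum_mul_natRecip_pow_div_log_pow hG.summable_norm k
  rwa [hFG, hconst] at h

end HasDimension

/-- The arithmetic function `m ↦ B(m²) / m`, which carries the sum of `B(n) / √n` over the
squares `n = m²`. Its value at `0` is the junk value `B 0 / 0 = 0`. -/
noncomputable def squareWeight (B : ℕ → ℝ) : ArithmeticFunction ℝ :=
  ⟨fun m ↦ B (m ^ 2) / m, by simp⟩

lemma squareWeight_apply (B : ℕ → ℝ) (m : ℕ) : squareWeight B m = B (m ^ 2) / m := rfl

lemma isMultiplicative_squareWeight {B : ℕ → ℝ} (hB1 : B 1 = 1)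
    (hmult : ∀ a b : ℕ, Nat.Coprime a b → B (a * b) = B a * B b) :
    (squareWeight B).IsMultiplicative := by
  refine ⟨by simp [squareWeight_apply, hB1], fun {m n} hmn ↦ ?_⟩
  simp only [squareWeight_apply, mul_pow, hmult _ _ (hmn.pow 2 2), Nat.cast_mul, mul_div_mul_comm]

lemma norm_squareWeight_prime_pow_le {B : ℕ → ℝ} {A : ℝ} {D p : ℕ} (hp : p.Prime)
    (hA : ∀ a : ℕ, |B (p ^ a)| ≤ A * ((a : ℝ) + 1) ^ D) (a : ℕ) :
    ‖squareWeight B (p ^ (a + 2))‖ ≤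
      ((p : ℝ) ^ 2)⁻¹ * (2 * 5 ^ D * A * (((a + 1 : ℕ) : ℝ) ^ D * (1 / 2) ^ (a + 1))) := by
  have hp₂ : (2 : ℝ) ≤ p := by exact_mod_cast hp.two_le
  have hA₀ : 0 ≤ A := by simpa using (abs_nonneg _).trans (hA 0)
  have hnum : |B (p ^ (2 * (a + 2)))| ≤ A * (5 * (a + 1 : ℕ)) ^ D := by
    refine (hA _).trans ?_
    gcongr
    push_cast
    linarith
  calc ‖squareWeight B (p ^ (a + 2))‖ = |B (p ^ (2 * (a + 2)))| / (p : ℝ) ^ (a + 2) := by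
        rw [squareWeight_apply, ← pow_mul', Real.norm_eq_abs, abs_div, Nat.abs_cast, Nat.cast_pow]
    _ ≤ A * (5 * (a + 1 : ℕ)) ^ D / (2 ^ a * (p : ℝ) ^ 2) := by
        rw [pow_add (p : ℝ)]
        gcongr
    _ = _ := by
        rw [mul_pow, one_div, inv_pow]
        field_simp
        ring

lemma hasDimension_squareWeight {B : ℕ → ℝ} {κ A : ℝ} {D : ℕ} (hB1 : B 1 = 1)
    (hmult : ∀ a b : ℕ, Nat.Coprime a b → B (a * b) = B a * B b)
    (hsq : ∀ p : ℕ, p.Prime → B (p ^ 2) = κ)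
    (hA : ∀ p a : ℕ, p.Prime → |B (p ^ a)| ≤ A * ((a : ℝ) + 1) ^ D) :
    HasDimension κ (squareWeight B) where
  isMultiplicative := isMultiplicative_squareWeight hB1 hmult
  apply_prime p := by rw [squareWeight_apply, hsq p p.2]
  summable_prime_pow := by
    have hexp : Summable fun a : ℕ ↦
        2 * 5 ^ D * A * (((a + 1 : ℕ) : ℝ) ^ D * (1 / 2) ^ (a + 1)) :=
      ((summable_nat_add_iff 1).2 <| summable_pow_mul_geometric_of_norm_lt_one D
        (r := (1 / 2 : ℝ)) (by norm_num)).mul_left _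
    have hA₀ : 0 ≤ A := by simpa using (abs_nonneg _).trans (hA 2 0 Nat.prime_two)
    exact (summable_primes_sq_inv.mul_of_nonneg hexp (fun p ↦ by positivity) fun a ↦ by positivity)
      |>.of_nonneg_of_le (fun q ↦ norm_nonneg _)
        fun q ↦ norm_squareWeight_prime_pow_le q.1.2 (fun a ↦ hA q.1 a q.1.2) q.2

lemma sum_div_sqrt_eq_sum_squareWeight {B : ℕ → ℝ}
    (hsq : ∀ n : ℕ, 0 < n → ¬ IsSquare n → B n = 0) {z : ℝ} (hz : 0 ≤ z) :
    ∑ n ∈ Icc 1 ⌊z⌋₊, B n / √n = ∑ m ∈ Ioc 0 ⌊√z⌋₊, squareWeight B m := by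
  have hfloor (m : ℕ) : m ≤ ⌊√z⌋₊ ↔ m ^ 2 ≤ ⌊z⌋₊ := by
    rw [Nat.le_floor_iff (Real.sqrt_nonneg z), Nat.le_floor_iff hz,
      Real.le_sqrt m.cast_nonneg hz, Nat.cast_pow]
  refine (sum_of_injOn (· ^ 2) (Nat.pow_left_injective two_ne_zero).injOn ?_ ?_ ?_).symm
  · intro m hm
    obtain ⟨hm₀, hmz⟩ := mem_Ioc.1 hm
    exact mem_Icc.2 ⟨Nat.one_le_pow _ _ hm₀, (hfloor m).1 hmz⟩
  · intro n hn hn'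
    obtain ⟨hn₁, hnz⟩ := mem_Icc.1 hn
    rw [hsq n hn₁, zero_div]
    rintro ⟨m, rfl⟩
    refine hn' ⟨m, mem_Ioc.2 ⟨Nat.pos_of_mul_pos_left hn₁, (hfloor m).2 ?_⟩, sq m⟩
    rwa [sq]
  · intro m _
    rw [squareWeight_apply, Nat.cast_pow, Real.sqrt_sq m.cast_nonneg]

theorem B_r_partial_sum_asymptotic_general {k : ℕ} {B : ℕ → ℝ}
    (hB : HasDimension k (squareWeight B))
    (hpos : ∀ p : Nat.Primes, 0 < ∑' a, squareWeight B (p ^ a))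
    (hsq : ∀ n : ℕ, 0 < n → ¬ IsSquare n → B n = 0) :
    0 < eulerConst k (squareWeight B) / k ! / 2 ^ k ∧
      Tendsto (fun z : ℝ ↦ (∑ n ∈ Icc 1 ⌊z⌋₊, B n / √n) / Real.log z ^ k) atTop
        (𝓝 (eulerConst k (squareWeight B) / k ! / 2 ^ k)) := by
  have hconst := hB.eulerConst_pos hpos
  refine ⟨by positivity, ?_⟩
  refine ((hB.tendsto_sum_div_log_pow.comp Real.tendsto_sqrt_atTop).div_const _).congr' ?_
  filter_upwards [eventually_ge_atTop 0] with z hz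
  rw [Function.comp_apply, ← sum_div_sqrt_eq_sum_squareWeight hsq hz, div_div, Real.log_sqrt hz,
    ← mul_pow, div_mul_cancel₀ _ two_ne_zero]

end

/-- Let `B_r` be a non-negative multiplicative function supported on squares with
`B_r(p) = 0`, `B_r(p²) = r(r-1)/2`, and `B_r(p^a)` bounded polynomially in `a`
uniformly in `p`.  Then `∑_{n ≤ z} B_r(n)/√n ∼ C_r (log z)^{r(r-1)/2}` as `z → ∞`,
for some constant `C_r > 0`. -/
theorem B_r_partial_sum_asymptotic
    (r : ℕ) (hr : 1 ≤ r) (B : ℕ → ℝ)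
    (hnn : ∀ n, 0 ≤ B n)
    (hB1 : B 1 = 1)
    (hmult : ∀ a b : ℕ, Nat.Coprime a b → B (a * b) = B a * B b)
    (hBp : ∀ p : ℕ, p.Prime → B p = 0)
    (hBp2 : ∀ p : ℕ, p.Prime → B (p ^ 2) = ((r * (r - 1) / 2 : ℕ) : ℝ))
    (hpoly : ∃ A : ℝ, ∃ D : ℕ, 0 < A ∧
      ∀ p a : ℕ, p.Prime → B (p ^ a) ≤ A * ((a : ℝ) + 1) ^ D)
    (hsq : ∀ n : ℕ, 0 < n → ¬ IsSquare n → B n = 0) :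
    ∃ C : ℝ, 0 < C ∧
      Tendsto (fun z : ℝ =>
          (∑ n ∈ Finset.Icc 1 ⌊z⌋₊, B n / Real.sqrt n) /
            Real.log z ^ (r * (r - 1) / 2)) atTop (nhds C) := by
  obtain ⟨A, D, -, hA⟩ := hpoly
  have hdim := hasDimension_squareWeight hB1 hmult hBp2 fun p a hp ↦
    (abs_of_nonneg (hnn _)).trans_le (hA p a hp)
  have hweight (m : ℕ) : 0 ≤ squareWeight B m := div_nonneg (hnn _) m.cast_nonneg
  exact ⟨_, B_r_partial_sum_asymptotic_general hdim (hdim.tsum_pow_pos_of_nonneg hweight) hsq⟩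
end
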